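/- arXiv:1410.3247 — 2 statements merged into one kernel-verified Lean document; each statement's English description precedes it below -/
import Mathlib

section
/- For each integer w ≥ 2, there exists a regular poset (P, A_1,…,A_n) of width w such that P contains an induced copy of the ladder L_{w·⌊(w+2)/2⌋}. -/
/-- `S` is an antichain with respect to the order relation `le`. -/
def IsAntichainOn {α : Type*} (le : α → α → Prop) (S : Finset α) : Prop :=
  ∀ a ∈ S, ∀ b ∈ S, a ≠ b → ¬ le a b ∧ ¬ le b a

/-- The poset `(α, le)` has width `w`: there is an antichain of size `w`
and every antichain has size at most `w`. -/
def IsWidth {α : Type*} (le : α → α → Prop) (w : ℕ) : Prop :=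
  (∃ S : Finset α, IsAntichainOn le S ∧ S.card = w) ∧
    ∀ S : Finset α, IsAntichainOn le S → S.card ≤ w

/-- `g` is an `n`-Grundy coloring of the poset `(α, le)`:
`g` takes values in `{1,…,n}`, is surjective onto `{1,…,n}`,
each color class is a chain (G1), and each vertex of color `j`
has an incomparable witness of every smaller color (G3). -/
def IsGrundy {α : Type*} (le : α → α → Prop) (n : ℕ) (g : α → ℕ) : Prop :=
  (∀ v, 1 ≤ g v ∧ g v ≤ n) ∧
  (∀ i, 1 ≤ i → i ≤ n → ∃ v, g v = i) ∧
  (∀ u v, g u = g v → le u v ∨ le v u) ∧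
  (∀ v i, 1 ≤ i → i < g v → ∃ u, (¬ le u v ∧ ¬ le v u) ∧ g u = i)

/-- `c` is the First-Fit chain partition of the poset `(α, le)` presented in the
strict total order `prec`: every vertex `v` gets the least color `c v ≥ 1` such
that all `prec`-earlier vertices of the same color are comparable to `v`. -/
def IsFFColoring {α : Type*} (le prec : α → α → Prop) (c : α → ℕ) : Prop :=
  ∀ v, 1 ≤ c v ∧
    (∀ u, prec u v → c u = c v → le u v ∨ le v u) ∧
    (∀ j, 1 ≤ j → j < c v → ∃ u, prec u v ∧ c u = j ∧ ¬ le u v ∧ ¬ le v u)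

/-- The sequences `x` (lower leg) and `y` (upper leg) form an induced copy of
the `m`-ladder `L_m` in the poset `(α, le)`. -/
def IsLadderIn {α : Type*} (le : α → α → Prop) {m : ℕ} (x y : Fin m → α) : Prop :=
  (∀ i j : Fin m, i < j → le (x i) (x j) ∧ x i ≠ x j) ∧
  (∀ i j : Fin m, i < j → le (y i) (y j) ∧ y i ≠ y j) ∧
  (∀ i : Fin m, le (x i) (y i) ∧ x i ≠ y i) ∧
  (∀ i j : Fin m, i < j → ¬ le (y i) (x j) ∧ ¬ le (x j) (y i))

/-- The poset `(α, le)` contains no induced copy of the `m`-ladder `L_m`. -/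
def LFree {α : Type*} (le : α → α → Prop) (m : ℕ) : Prop :=
  ¬ ∃ x y : Fin m → α, IsLadderIn le x y

/-- `A ⊑ B`: every element of `A` is `le`-below some element of `B`. -/
def Below {α : Type*} (le : α → α → Prop) (A B : Finset α) : Prop :=
  ∀ a ∈ A, ∃ b ∈ B, le a b

/-- `A ⊏ B`: `A ⊑ B` and `A ≠ B`. -/
def StrictBelow {α : Type*} (le : α → α → Prop) (A B : Finset α) : Prop :=
  Below le A B ∧ A ≠ B

/-- The bipartite poset induced by antichains `A` and `B` (with `A` below `B`)
is a core: `|A| = |B|` and every comparable pair `x ≤ y` with `x ∈ A`, `y ∈ B`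
is a Dilworth edge, i.e. belongs to a perfect matching of comparable pairs. -/
def IsCore {α : Type*} (le : α → α → Prop) (A B : Finset α) : Prop :=
  A.card = B.card ∧
    ∀ x ∈ A, ∀ y ∈ B, le x y →
      ∃ f : α → α, Set.BijOn f ↑A ↑B ∧ (∀ a ∈ A, le a (f a)) ∧ f x = y

/-- `A j = A_{s(i)}`: among the antichains presented before `A i`, it is the
`⊑`-least one strictly above `A i`. -/
def IsSuccIdx {α : Type*} (le : α → α → Prop) {n : ℕ} (A : Fin n → Finset α)
    (i j : Fin n) : Prop :=
  j < i ∧ StrictBelow le (A i) (A j) ∧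
    ∀ k : Fin n, k < i → StrictBelow le (A i) (A k) → Below le (A j) (A k)

/-- `A j = A_{p(i)}`: among the antichains presented before `A i`, it is the
`⊑`-greatest one strictly below `A i`. -/
def IsPredIdx {α : Type*} (le : α → α → Prop) {n : ℕ} (A : Fin n → Finset α)
    (i j : Fin n) : Prop :=
  j < i ∧ StrictBelow le (A j) (A i) ∧
    ∀ k : Fin n, k < i → StrictBelow le (A k) (A i) → Below le (A k) (A j)

/-- `(P, A_1, …, A_n)` is a regular poset of width `w`: the `A i` are pairwise
disjoint maximum antichains (each of size `w`, the width of `P`) covering `P`,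
linearly ordered by `⊑`; consecutive-at-presentation-time pairs induce cores
(R4); and every comparability with an earlier antichain factors through the
`⊑`-neighbors at presentation time (R5). -/
def IsRegularPoset {α : Type*} (le : α → α → Prop) (w : ℕ) {n : ℕ}
    (A : Fin n → Finset α) : Prop :=
  (∀ v : α, ∃ i, v ∈ A i) ∧
  (∀ i j : Fin n, i ≠ j → ∀ v ∈ A i, v ∉ A j) ∧
  (∀ i, IsAntichainOn le (A i)) ∧
  (∀ i, (A i).card = w) ∧
  IsWidth le w ∧
  (∀ i j : Fin n, Below le (A i) (A j) ∨ Below le (A j) (A i)) ∧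
  (∀ i j : Fin n, IsSuccIdx le A i j → IsCore le (A i) (A j)) ∧
  (∀ i j : Fin n, IsPredIdx le A i j → IsCore le (A j) (A i)) ∧
  (∀ (i j : Fin n) (x y : α), x ∈ A i → y ∈ A j → le x y → x ≠ y →
    (j < i → ∃ k, IsSuccIdx le A i k ∧ ∃ z ∈ A k, le x z ∧ x ≠ z ∧ le z y) ∧
    (i < j → ∃ k, IsPredIdx le A j k ∧ ∃ z ∈ A k, le x z ∧ le z y ∧ z ≠ y))

/-- `x` is an ascending chain: increasing both in the poset and in color. -/
def IsAscending {α : Type*} (le : α → α → Prop) (g : α → ℕ) {k : ℕ}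
    (x : Fin k → α) : Prop :=
  ∀ i j : Fin k, i < j → (le (x i) (x j) ∧ x i ≠ x j) ∧ g (x i) < g (x j)

/-- `x` is a descending chain: decreasing in the poset, increasing in color. -/
def IsDescending {α : Type*} (le : α → α → Prop) (g : α → ℕ) {k : ℕ}
    (x : Fin k → α) : Prop :=
  ∀ i j : Fin k, i < j → (le (x j) (x i) ∧ x i ≠ x j) ∧ g (x i) < g (x j)

/-- The order of the lexicographic product `P · Q`. -/
def LexLe {α β : Type*} (leP : α → α → Prop) (leQ : β → β → Prop) :
    α × β → α × β → Prop :=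
  fun a b => (leP a.1 b.1 ∧ a.1 ≠ b.1) ∨ (a.1 = b.1 ∧ leQ a.2 b.2)

/-!
The poset is layered: its vertices are pairs (level, color) with `w` colors, its levels are maximum
antichains, and they are presented in an order of their own. Comparabilities are generated by links
between levels that are consecutive at some moment of the presentation. If the links are reflexive
and symmetric, and presenting a level between two neighbors composes only links that the two
neighbors already have, then every comparability between neighbors is a link, and the matching that
swaps the two linked colors shows that neighbors induce a core. So the poset is regular.

The levels come in `w` blocks of `2 * w` levels each; the lower vertices of the rungs lie in the
lower half of a block, the upper vertices, all of color `0`, in the upper half. In block `0` the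
last lower level is linked directly to every upper level as it is presented: the `i`-th lower vertex
reaches the colors up to `w - i` there, and the colors from `w - i` on reach color `0` at the `i`-th
upper level. This gives `w` rungs. In block `u > 0` every lower level is linked directly to the
first upper level: the `i`-th lower vertex reaches the colors from `i` on there, and the colors up
to `i` have reached color `0` by the `i`-th upper level. This gives `u + 1` rungs, hence
`w * (w + 3) / 2 - 1` in all.
-/

theorem IsLadderIn.of_comp {α β : Type*} {le : β → β → Prop} {f : α → β} {m : ℕ}
    {x y : Fin m → α} (h : IsLadderIn le (f ∘ x) (f ∘ y)) :
    IsLadderIn (fun a b => le (f a) (f b)) x y :=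
  ⟨fun i j hij => (h.1 i j hij).imp_right (ne_of_apply_ne f),
    fun i j hij => (h.2.1 i j hij).imp_right (ne_of_apply_ne f),
    fun i => (h.2.2.1 i).imp_right (ne_of_apply_ne f), h.2.2.2⟩

namespace LayeredPoset

section Order

variable {ι κ τ : Type*} [LinearOrder ι] [LinearOrder τ] {t : ι → τ} {D : ι → ι → κ → κ → Prop}

/-- Two levels `p < q` are adjacent for the presentation times `t` if they are consecutive among
the levels present at the moment when the later of the two is presented. -/
def Adjacent (t : ι → τ) (p q : ι) : Prop :=
  p < q ∧ ∀ r, p < r → r < q → t p < t r ∧ t q < t r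

/-- The generating comparabilities of a layered poset: vertices are pairs (level, color), and
`D p q` tells which colors of the adjacent levels `p` and `q` are linked. -/
def Step (t : ι → τ) (D : ι → ι → κ → κ → Prop) (v v' : ι × κ) : Prop :=
  Adjacent t v.1 v'.1 ∧ D v.1 v'.1 v.2 v'.2

/-- The order of the layered poset with presentation times `t` and links `D`. -/
def Reach (t : ι → τ) (D : ι → ι → κ → κ → Prop) : ι × κ → ι × κ → Prop :=
  Relation.ReflTransGen (Step t D)

/-- The local conditions on the links of a layered poset that make it regular: reflexivity and
symmetry make the links between two adjacent levels a core, and composability says that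
presenting a level between two adjacent ones creates no new comparability. -/
structure IsCoherent (t : ι → τ) (D : ι → ι → κ → κ → Prop) : Prop where
  refl : ∀ p q c, D p q c c
  symm : ∀ {p q c d}, D p q c d → D p q d c
  comp : ∀ {p a q b c d}, Adjacent t p a → Adjacent t a q → Adjacent t p q →
    D p a b c → D a q c d → D p q b d

theorem adjacent_of_covBy {p q : ι} (h : p ⋖ q) : Adjacent t p q :=
  ⟨h.lt, fun _ hr hr' => absurd hr' (h.2 hr)⟩

namespace Reach

theorem eq_or_level_lt {v v' : ι × κ} (h : Reach t D v v') : v = v' ∨ v.1 < v'.1 := by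
  induction h with
  | refl => exact Or.inl rfl
  | tail _ hstep ih =>
    rcases ih with rfl | ih
    · exact Or.inr hstep.1.1
    · exact Or.inr (ih.trans hstep.1.1)

theorem level_le {v v' : ι × κ} (h : Reach t D v v') : v.1 ≤ v'.1 := by
  rcases h.eq_or_level_lt with rfl | h
  exacts [le_rfl, h.le]

theorem antisymm {v v' : ι × κ} (h : Reach t D v v') (h' : Reach t D v' v) : v = v' :=
  h.eq_or_level_lt.resolve_right h'.level_le.not_gt

theorem mem_of_closed {W : Set (ι × κ)} (hW : ∀ v v', Step t D v v' → v ∈ W → v' ∈ W)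
    {v v' : ι × κ} (h : Reach t D v v') (hv : v ∈ W) : v' ∈ W := by
  induction h with
  | refl => exact hv
  | tail _ hstep ih => exact hW _ _ hstep ih

theorem exists_through {v v' : ι × κ} {m : ι} (h : Reach t D v v') (hm : v.1 ≤ m) (hm' : m ≤ v'.1)
    (hjump : ∀ a b, v.1 ≤ a → a < m → m < b → b ≤ v'.1 → ¬ Adjacent t a b) :
    ∃ c, Reach t D v (m, c) ∧ Reach t D (m, c) v' := by
  induction h with
  | refl =>
    obtain rfl := le_antisymm hm hm'
    exact ⟨v.2, .refl, .refl⟩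
  | @tail b b' hvb hstep ih =>
    rcases le_or_gt m b.1 with hmb | hbm
    · obtain ⟨c, hc, hc'⟩ := ih hmb fun x y hx hxm hmy hy =>
        hjump x y hx hxm hmy (hy.trans hstep.1.1.le)
      exact ⟨c, hc, hc'.tail hstep⟩
    · obtain rfl : m = b'.1 := by
        by_contra hne
        exact hjump b.1 b'.1 (level_le hvb) hbm (hm'.lt_of_ne hne) le_rfl hstep.1
      exact ⟨b'.2, hvb.tail hstep, .refl⟩

theorem exists_through_succ {p m : ι} {c : κ} {v : ι × κ} (h : Reach t D (p, c) v)
    (hpm : Adjacent t p m) (ht : t m < t p) (hmv : m ≤ v.1) :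
    ∃ d, Reach t D (p, c) (m, d) ∧ Reach t D (m, d) v := by
  refine h.exists_through hpm.1.le hmv fun a b ha ham hmb _ hab => ?_
  have htam : t a < t m := (hab.2 m ham hmb).1
  rcases ha.eq_or_lt with rfl | ha
  · exact lt_asymm ht htam
  · exact lt_asymm (hpm.2 a ha ham).2 htam

theorem exists_through_pred {m q : ι} {d : κ} {v : ι × κ} (h : Reach t D v (q, d))
    (hmq : Adjacent t m q) (ht : t m < t q) (hvm : v.1 ≤ m) :
    ∃ c, Reach t D v (m, c) ∧ Reach t D (m, c) (q, d) := by
  refine h.exists_through hvm hmq.1.le fun a b _ ham hmb hb hab => ?_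
  have htbm : t b < t m := (hab.2 m ham hmb).2
  rcases hb.eq_or_lt with rfl | hb
  · exact lt_asymm ht htbm
  · exact lt_asymm (hmq.2 b hmb hb).1 htbm

end Reach

variable [LocallyFiniteOrder ι]

theorem IsCoherent.reach_of_le (hD : IsCoherent t D) {p q : ι} (h : p ≤ q) (c : κ) :
    Reach t D (p, c) (q, c) :=
  (le_iff_reflTransGen_covBy.1 h).lift (·, c) fun _ _ hcov =>
    ⟨adjacent_of_covBy hcov, hD.refl _ _ _⟩

theorem Adjacent.exists_split (ht : t.Injective) {p q b : ι} (hpq : Adjacent t p q)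
    (hb : b ∈ Set.Ioo p q) :
    ∃ a ∈ Set.Ioo p q, Adjacent t p a ∧ Adjacent t a q ∧
      ∀ x y, p ≤ x → x < a → a < y → y ≤ q → Adjacent t x y → x = p ∧ y = q := by
  -- `a` is the first level presented strictly between `p` and `q`
  obtain ⟨a, ha, hmin⟩ := Finset.exists_min_image (Finset.Ioo p q) t ⟨b, Finset.mem_Ioo.2 hb⟩
  simp only [Finset.mem_Ioo] at ha hmin
  have hfirst : ∀ r, p < r → r < q → r ≠ a → t a < t r := fun r hpr hrq hra =>
    (hmin r ⟨hpr, hrq⟩).lt_of_ne (ht.ne hra.symm)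
  refine ⟨a, ha, ⟨ha.1, fun r hpr hra => ?_⟩, ⟨ha.2, fun r har hrq => ?_⟩,
    fun x y hpx hxa hay hyq hxy => ⟨?_, ?_⟩⟩
  · exact ⟨(hpq.2 r hpr (hra.trans ha.2)).1, hfirst r hpr (hra.trans ha.2) hra.ne⟩
  · exact ⟨hfirst r (ha.1.trans har) hrq har.ne', (hpq.2 r (ha.1.trans har) hrq).2⟩
  · by_contra hne
    exact lt_asymm (hxy.2 a hxa hay).1
      (hfirst x (hpx.lt_of_ne' hne) (hxa.trans ha.2) hxa.ne)
  · by_contra hne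
    exact lt_asymm (hxy.2 a hxa hay).2
      (hfirst y (ha.1.trans hay) (hyq.lt_of_ne hne) hay.ne')

theorem IsCoherent.link_of_reach (hD : IsCoherent t D) (ht : t.Injective) {p q : ι} {c d : κ}
    (hpq : Adjacent t p q) (h : Reach t D (p, c) (q, d)) : D p q c d := by
  induction hcard : (Finset.Ioo p q).card using Nat.strong_induction_on generalizing p q c d with
  | _ k ih =>
    subst hcard
    rcases Relation.ReflTransGen.cases_head h with heq | ⟨⟨b, e⟩, hstep, hrest⟩
    · exact absurd (congrArg Prod.fst heq) hpq.1.ne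
    have hpb : p < b := hstep.1.1
    have hbq : b ≤ q := Reach.level_le hrest
    rcases hbq.eq_or_lt with rfl | hbq
    · obtain heq | hlt := Reach.eq_or_level_lt hrest
      · obtain rfl : e = d := congrArg Prod.snd heq
        exact hstep.2
      · exact absurd hlt (lt_irrefl _)
    · obtain ⟨a, ⟨hpa, haq⟩, hadj, hadj', hjump⟩ := hpq.exists_split ht ⟨hpb, hbq⟩
      have hba : b ≤ a := by
        by_contra! hab
        exact hbq.ne (hjump p b le_rfl hpa hab hbq.le hstep.1).2
      obtain ⟨f, hf, hf'⟩ := Reach.exists_through (m := a) hrest hba haq.le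
        fun x y hbx hxa hay hyq hxy =>
          (hpb.trans_le hbx).ne' (hjump x y (hpb.le.trans hbx) hxa hay hyq hxy).1
      have hmem : a ∈ Finset.Ioo p q := Finset.mem_Ioo.2 ⟨hpa, haq⟩
      refine hD.comp hadj hadj' hpq (ih _ (Finset.card_lt_card ?_) hadj (.head hstep hf) rfl)
        (ih _ (Finset.card_lt_card ?_) hadj' hf' rfl)
      · exact (Finset.ssubset_iff_of_subset (Finset.Ioo_subset_Ioo_right haq.le)).2
          ⟨a, hmem, by simp⟩
      · exact (Finset.ssubset_iff_of_subset (Finset.Ioo_subset_Ioo_left hpa.le)).2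
          ⟨a, hmem, by simp⟩

end Order

theorem exists_strictMono_comp_range_eq {ι τ : Type*} [LinearOrder τ] {t : ι → τ}
    (ht : t.Injective) (s : Finset ι) :
    ∃ lev : Fin s.card → ι, StrictMono (t ∘ lev) ∧ Set.range lev = s := by
  let e : Fin s.card ↪o τ := (s.map ⟨t, ht⟩).orderEmbOfFin (s.card_map _)
  have hrange : Set.range e = t '' s := by simp [e]
  choose lev hlev hte using fun i => hrange.subset (Set.mem_range_self i)
  refine ⟨lev, by simpa only [funext hte, Function.comp_def] using e.strictMono, ?_⟩
  refine subset_antisymm (Set.range_subset_iff.2 hlev) fun p hp => ?_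
  obtain ⟨i, hi⟩ := hrange.superset (Set.mem_image_of_mem t hp)
  exact ⟨i, ht ((hte i).trans hi)⟩

section Regular

variable {α ι κ τ : Type*} {n : ℕ}

/-- The order of the layered poset transported to a vertex type `α`: `φ` sends a vertex to its
presentation index and its color, and the layer with index `i` sits at level `lev i`. -/
def LayerLE [LinearOrder ι] [LinearOrder τ] (t : ι → τ) (D : ι → ι → κ → κ → Prop)
    (lev : Fin n → ι) (φ : α ≃ Fin n × κ) (v v' : α) : Prop :=
  Reach t D (Prod.map lev id (φ v)) (Prod.map lev id (φ v'))

/-- The antichain presented at index `i`. -/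
def layer [Fintype κ] (φ : α ≃ Fin n × κ) (i : Fin n) : Finset α :=
  Finset.univ.map ⟨fun c => φ.symm (i, c), φ.symm.injective.comp (Prod.mk_right_injective i)⟩

section Layer

variable [Fintype κ] {φ : α ≃ Fin n × κ} {i j : Fin n}

theorem mem_layer {v : α} : v ∈ layer φ i ↔ ∃ c, φ.symm (i, c) = v := by
  simp [layer]

theorem symm_mem_layer {c : κ} : φ.symm (i, c) ∈ layer φ j ↔ i = j := by
  simp [mem_layer, eq_comm]

theorem card_layer : (layer φ i).card = Fintype.card κ := Finset.card_map _

theorem layer_injective [Nonempty κ] : (layer φ).Injective := fun i j h => by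
  obtain ⟨c⟩ := ‹Nonempty κ›
  exact symm_mem_layer.1 (h ▸ symm_mem_layer.2 rfl : φ.symm (i, c) ∈ layer φ j)

end Layer

variable [LinearOrder ι] [LinearOrder τ] {t : ι → τ} {D : ι → ι → κ → κ → Prop}
  {lev : Fin n → ι} {φ : α ≃ Fin n × κ} {i j : Fin n}

theorem isPartialOrder_layerLE (hlev : lev.Injective) : IsPartialOrder α (LayerLE t D lev φ) where
  refl _ := .refl
  trans _ _ _ := .trans
  antisymm _ _ h h' := φ.injective (hlev.prodMap Function.injective_id (Reach.antisymm h h'))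

theorem layerLE_symm_symm {c d : κ} :
    LayerLE t D lev φ (φ.symm (i, c)) (φ.symm (j, d)) ↔ Reach t D (lev i, c) (lev j, d) := by
  simp [LayerLE]

-- A level presented after `lev i` cannot separate it from its neighbor at that time.
theorem adjacent_of_forall_le (hlev : (Set.range lev).OrdConnected) (hmono : StrictMono (t ∘ lev))
    (hji : j < i) (hlt : lev i < lev j) (hmin : ∀ k < i, lev i < lev k → lev j ≤ lev k) :
    Adjacent t (lev i) (lev j) := by
  refine ⟨hlt, fun r hir hrj => ?_⟩
  obtain ⟨k, rfl⟩ := hlev.out ⟨i, rfl⟩ ⟨j, rfl⟩ ⟨hir.le, hrj.le⟩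
  have hki : k ≠ i := by rintro rfl; exact hir.false
  have hik : i < k := (lt_or_gt_of_ne hki).resolve_left fun hki => (hmin k hki hir).not_gt hrj
  exact ⟨hmono hik, hmono (hji.trans hik)⟩

theorem adjacent_of_forall_ge (hlev : (Set.range lev).OrdConnected) (hmono : StrictMono (t ∘ lev))
    (hji : j < i) (hlt : lev j < lev i) (hmax : ∀ k < i, lev k < lev i → lev k ≤ lev j) :
    Adjacent t (lev j) (lev i) := by
  refine ⟨hlt, fun r hjr hri => ?_⟩
  obtain ⟨k, rfl⟩ := hlev.out ⟨j, rfl⟩ ⟨i, rfl⟩ ⟨hjr.le, hri.le⟩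
  have hki : k ≠ i := by rintro rfl; exact hri.false
  have hik : i < k := (lt_or_gt_of_ne hki).resolve_left fun hki => (hmax k hki hri).not_gt hjr
  exact ⟨hmono (hji.trans hik), hmono hik⟩

variable [Fintype κ]

theorem isAntichainOn_layer : IsAntichainOn (LayerLE t D lev φ) (layer φ i) := by
  have hnot : ∀ v ∈ layer φ i, ∀ v' ∈ layer φ i, v ≠ v' → ¬ LayerLE t D lev φ v v' := by
    intro v hv v' hv' hne hle
    obtain ⟨c, rfl⟩ := mem_layer.1 hv
    obtain ⟨d, rfl⟩ := mem_layer.1 hv'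
    rcases (layerLE_symm_symm.1 hle).eq_or_level_lt with heq | hlt
    · exact hne (by rw [show c = d from congrArg Prod.snd heq])
    · exact lt_irrefl _ hlt
  exact fun v hv v' hv' hne => ⟨hnot v hv v' hv' hne, hnot v' hv' v hv hne.symm⟩

variable [LocallyFiniteOrder ι]

theorem below_layer_iff [Nonempty κ] (hD : IsCoherent t D) :
    Below (LayerLE t D lev φ) (layer φ i) (layer φ j) ↔ lev i ≤ lev j := by
  constructor
  · intro h
    obtain ⟨c⟩ := ‹Nonempty κ›
    obtain ⟨v, hv, hle⟩ := h (φ.symm (i, c)) (symm_mem_layer.2 rfl)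
    obtain ⟨d, rfl⟩ := mem_layer.1 hv
    exact (layerLE_symm_symm.1 hle).level_le
  · intro h v hv
    obtain ⟨c, rfl⟩ := mem_layer.1 hv
    exact ⟨φ.symm (j, c), symm_mem_layer.2 rfl, layerLE_symm_symm.2 (hD.reach_of_le h c)⟩

theorem strictBelow_layer_iff [Nonempty κ] (hD : IsCoherent t D) (hlev : lev.Injective) :
    StrictBelow (LayerLE t D lev φ) (layer φ i) (layer φ j) ↔ lev i < lev j := by
  rw [StrictBelow, below_layer_iff hD, layer_injective.ne_iff, lt_iff_le_and_ne, hlev.ne_iff]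

theorem isSuccIdx_layer_iff [Nonempty κ] (hD : IsCoherent t D) (hlev : lev.Injective) :
    IsSuccIdx (LayerLE t D lev φ) (layer φ) i j ↔
      j < i ∧ lev i < lev j ∧ ∀ k < i, lev i < lev k → lev j ≤ lev k := by
  simp only [IsSuccIdx, strictBelow_layer_iff hD hlev, below_layer_iff hD]

theorem isPredIdx_layer_iff [Nonempty κ] (hD : IsCoherent t D) (hlev : lev.Injective) :
    IsPredIdx (LayerLE t D lev φ) (layer φ) i j ↔
      j < i ∧ lev j < lev i ∧ ∀ k < i, lev k < lev i → lev k ≤ lev j := by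
  simp only [IsPredIdx, strictBelow_layer_iff hD hlev, below_layer_iff hD]

theorem isWidth_layerLE [NeZero n] (hD : IsCoherent t D) :
    IsWidth (LayerLE t D lev φ) (Fintype.card κ) := by
  refine ⟨⟨layer φ 0, isAntichainOn_layer, card_layer⟩, fun S hS => ?_⟩
  refine Finset.card_le_card_of_injOn (fun v => (φ v).2) (fun _ _ => Finset.mem_univ _) ?_
  intro v hv v' hv' hcolor
  by_contra hne
  obtain ⟨hle, hle'⟩ := hS v hv v' hv' hne
  obtain ⟨⟨i, c⟩, rfl⟩ := φ.symm.surjective v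
  obtain ⟨⟨j, d⟩, rfl⟩ := φ.symm.surjective v'
  obtain rfl : c = d := by simpa using hcolor
  rcases le_total (lev i) (lev j) with h | h
  · exact hle (layerLE_symm_symm.2 (hD.reach_of_le h c))
  · exact hle' (layerLE_symm_symm.2 (hD.reach_of_le h c))

-- The matching through a linked pair of colors exchanges these two and fixes all others.
theorem isCore_layer (hD : IsCoherent t D) (ht : t.Injective) (hij : Adjacent t (lev i) (lev j)) :
    IsCore (LayerLE t D lev φ) (layer φ i) (layer φ j) := by
  classical
  refine ⟨card_layer.trans card_layer.symm, fun v hv v' hv' hle => ?_⟩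
  obtain ⟨c, rfl⟩ := mem_layer.1 hv
  obtain ⟨d, rfl⟩ := mem_layer.1 hv'
  have hlink : D (lev i) (lev j) c d := hD.link_of_reach ht hij (layerLE_symm_symm.1 hle)
  have hswap : ∀ e, D (lev i) (lev j) e (Equiv.swap c d e) := by
    intro e
    rcases eq_or_ne e c with rfl | hec
    · simpa using hlink
    rcases eq_or_ne e d with rfl | hed
    · simpa using hD.symm hlink
    · simpa [Equiv.swap_apply_of_ne_of_ne hec hed] using hD.refl _ _ e
  refine ⟨fun v => φ.symm (j, Equiv.swap c d (φ v).2), ⟨?_, ?_, ?_⟩, ?_, by simp⟩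
  · exact fun v _ => symm_mem_layer.2 rfl
  · intro v hv v' hv' heq
    obtain ⟨e, rfl⟩ := mem_layer.1 hv
    obtain ⟨f, rfl⟩ := mem_layer.1 hv'
    simpa using heq
  · intro v hv
    obtain ⟨e, rfl⟩ := mem_layer.1 hv
    exact ⟨φ.symm (i, Equiv.swap c d e), symm_mem_layer.2 rfl, by simp⟩
  · intro v hv
    obtain ⟨e, rfl⟩ := mem_layer.1 hv
    simp only [Equiv.apply_symm_apply]
    exact layerLE_symm_symm.2 (.single ⟨hij, hswap e⟩)

theorem exists_between_of_succ [Nonempty κ] (hD : IsCoherent t D)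
    (hlev : (Set.range lev).OrdConnected) (hinj : lev.Injective) (hmono : StrictMono (t ∘ lev))
    {c d : κ} (hji : j < i) (hlt : lev i < lev j) (hle : Reach t D (lev i, c) (lev j, d)) :
    ∃ k, IsSuccIdx (LayerLE t D lev φ) (layer φ) i k ∧
      ∃ e, Reach t D (lev i, c) (lev k, e) ∧ Reach t D (lev k, e) (lev j, d) := by
  obtain ⟨k, hk, hmin⟩ := Finset.exists_min_image {k | k < i ∧ lev i < lev k} lev
    ⟨j, by simp [hji, hlt]⟩
  simp only [Finset.mem_filter_univ] at hk hmin
  have hmin' : ∀ l < i, lev i < lev l → lev k ≤ lev l := fun l hl hl' => hmin l ⟨hl, hl'⟩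
  exact ⟨k, (isSuccIdx_layer_iff hD hinj).2 ⟨hk.1, hk.2, hmin'⟩,
    hle.exists_through_succ (adjacent_of_forall_le hlev hmono hk.1 hk.2 hmin') (hmono hk.1)
      (hmin' j hji hlt)⟩

theorem exists_between_of_pred [Nonempty κ] (hD : IsCoherent t D)
    (hlev : (Set.range lev).OrdConnected) (hinj : lev.Injective) (hmono : StrictMono (t ∘ lev))
    {c d : κ} (hij : i < j) (hlt : lev i < lev j) (hle : Reach t D (lev i, c) (lev j, d)) :
    ∃ k, IsPredIdx (LayerLE t D lev φ) (layer φ) j k ∧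
      ∃ e, Reach t D (lev i, c) (lev k, e) ∧ Reach t D (lev k, e) (lev j, d) := by
  obtain ⟨k, hk, hmax⟩ := Finset.exists_max_image {k | k < j ∧ lev k < lev j} lev
    ⟨i, by simp [hij, hlt]⟩
  simp only [Finset.mem_filter_univ] at hk hmax
  have hmax' : ∀ l < j, lev l < lev j → lev l ≤ lev k := fun l hl hl' => hmax l ⟨hl, hl'⟩
  exact ⟨k, (isPredIdx_layer_iff hD hinj).2 ⟨hk.1, hk.2, hmax'⟩,
    hle.exists_through_pred (adjacent_of_forall_ge hlev hmono hk.1 hk.2 hmax') (hmono hk.1)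
      (hmax' i hij hlt)⟩

theorem isRegularPoset_layer [NeZero n] [Nonempty κ] (hD : IsCoherent t D) (ht : t.Injective)
    (hlev : (Set.range lev).OrdConnected) (hmono : StrictMono (t ∘ lev)) :
    IsRegularPoset (LayerLE t D lev φ) (Fintype.card κ) (layer φ) := by
  have hinj : lev.Injective := hmono.injective.of_comp
  have hlev_ne : ∀ {i k : Fin n} {c e : κ}, lev i ≠ lev k → φ.symm (i, c) ≠ φ.symm (k, e) :=
    fun hne heq => hne (congrArg lev (congrArg Prod.fst (φ.symm.injective heq)))
  refine ⟨fun v => ⟨(φ v).1, mem_layer.2 ⟨(φ v).2, by simp⟩⟩, fun i j hij v hv => ?_,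
    fun _ => isAntichainOn_layer, fun _ => card_layer, isWidth_layerLE hD, fun i j => ?_,
    fun i j h => ?_, fun i j h => ?_, fun i j v v' hv hv' hle hne => ?_⟩
  · obtain ⟨c, rfl⟩ := mem_layer.1 hv
    exact mt symm_mem_layer.1 hij
  · simp only [below_layer_iff hD, le_total]
  · obtain ⟨hji, hlt, hmin⟩ := (isSuccIdx_layer_iff hD hinj).1 h
    exact isCore_layer hD ht (adjacent_of_forall_le hlev hmono hji hlt hmin)
  · obtain ⟨hji, hlt, hmax⟩ := (isPredIdx_layer_iff hD hinj).1 h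
    exact isCore_layer hD ht (adjacent_of_forall_ge hlev hmono hji hlt hmax)
  · obtain ⟨c, rfl⟩ := mem_layer.1 hv
    obtain ⟨d, rfl⟩ := mem_layer.1 hv'
    rw [layerLE_symm_symm] at hle
    have hlt : lev i < lev j := hle.eq_or_level_lt.resolve_left fun heq => hne <| by
      simpa [hinj.eq_iff] using heq
    refine ⟨fun hji => ?_, fun hij => ?_⟩
    · obtain ⟨k, hk, e, hck, hkd⟩ := exists_between_of_succ (φ := φ) hD hlev hinj hmono hji hlt hle
      have hik : lev i < lev k := ((isSuccIdx_layer_iff hD hinj).1 hk).2.1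
      exact ⟨k, hk, φ.symm (k, e), symm_mem_layer.2 rfl, layerLE_symm_symm.2 hck,
        hlev_ne hik.ne, layerLE_symm_symm.2 hkd⟩
    · obtain ⟨k, hk, e, hck, hkd⟩ := exists_between_of_pred (φ := φ) hD hlev hinj hmono hij hlt hle
      have hkj : lev k < lev j := ((isPredIdx_layer_iff hD hinj).1 hk).2.1
      exact ⟨k, hk, φ.symm (k, e), symm_mem_layer.2 rfl, layerLE_symm_symm.2 hck,
        layerLE_symm_symm.2 hkd, hlev_ne hkj.ne⟩

end Regular

theorem exists_isRegularPoset_isLadderIn {ι τ : Type*} [LinearOrder ι]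
    [LocallyFiniteOrder ι] [LinearOrder τ] {t : ι → τ} {w m : ℕ} [NeZero w]
    {D : ι → ι → Fin w → Fin w → Prop} (hD : IsCoherent t D) (ht : t.Injective) {s : Finset ι}
    (hs : (s : Set ι).OrdConnected) (hne : s.Nonempty) {x y : Fin m → ι × Fin w}
    (hladder : IsLadderIn (Reach t D) x y) (hx : ∀ i, (x i).1 ∈ s) (hy : ∀ i, (y i).1 ∈ s) :
    ∃ (N n : ℕ) (le : Fin N → Fin N → Prop) (A : Fin n → Finset (Fin N)) (x y : Fin m → Fin N),
      IsPartialOrder (Fin N) le ∧ IsRegularPoset le w A ∧ IsLadderIn le x y := by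
  obtain ⟨lev, hmono, hrange⟩ := exists_strictMono_comp_range_eq ht s
  let φ := (finProdFinEquiv (m := s.card) (n := w)).symm
  let position a := Prod.map lev id (φ a)
  have hlift : ∀ v : Fin m → ι × Fin w, (∀ i, (v i).1 ∈ s) → ∃ v', position ∘ v' = v := by
    intro v hv
    have hlev : ∀ i, (v i).1 ∈ Set.range lev := fun i => hrange ▸ hv i
    choose l hl using hlev
    exact ⟨fun i => φ.symm (l i, (v i).2), funext fun i => by simp [position, hl]⟩
  obtain ⟨x', hx'⟩ := hlift x hx
  obtain ⟨y', hy'⟩ := hlift y hy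
  have hlevels : NeZero s.card := ⟨hne.card_ne_zero⟩
  refine ⟨_, _, LayerLE t D lev φ, layer φ, x', y',
    isPartialOrder_layerLE hmono.injective.of_comp, ?_, ?_⟩
  · simpa using isRegularPoset_layer (φ := φ) hD ht (hrange ▸ hs) hmono
  · exact .of_comp (f := position) (by rwa [hx', hy'])

section Construction

variable {w u r r' : ℕ}

/-- The presentation time of each level; level `2 * w * u + r` with `r < 2 * w` is level `r` of
block `u`. The times of the levels `w, …, 2 * w - 1` of block `0` and `1, …, w - 1` of the other
blocks are odd, and these levels come after all levels of their block with an even time: in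
descending order in block `0`, in ascending order in the other blocks. -/
def time (w p : ℕ) : ℕ :=
  if p < 2 * w then
    if p < w then 2 * p else 2 * (4 * w - p) + 1
  else if 0 < p % (2 * w) ∧ p % (2 * w) < w then 2 * (p + 2 * w) + 1 else 2 * p

/-- Adjacency of the levels `r` and `r'` of block `u`; `r' = 2 * w` is the first level of the next
block. -/
def BlockAdjacent (w u r r' : ℕ) : Prop :=
  r' = r + 1 ∨ (u = 0 ∧ r + 1 = w ∧ w ≤ r' ∧ r' ≤ 2 * w) ∨ (0 < u ∧ r < w ∧ r' = w)

/-- The links between distinct colors on the adjacent levels `r` and `r'` of block `u` form a star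
with center `c` and leaves `c'`. -/
def Star (w u r r' c c' : ℕ) : Prop :=
  (u = 0 ∧
    (r' = r + 1 ∧ r' < w ∧ c = 1 ∧ (r = 0 ∧ c' = 0 ∨ 0 < r ∧ c' + r = w) ∨
      r + 1 = w ∧ w ≤ r' ∧ c = 0 ∧ 2 * w ≤ c' + r')) ∨
  (0 < u ∧
    (r < w ∧ r' = w ∧ c = u ∧ (r ≤ c' ∧ c' < u ∨ c' = u + 1) ∨
      w ≤ r ∧ r' = r + 1 ∧ r' < 2 * w ∧ c = 0 ∧ c' + w = r' ∧ 0 < c' ∧ c' ≤ u))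

/-- The links between the levels `r` and `r'` of block `u`. -/
def BlockLink (w u r r' c d : ℕ) : Prop :=
  c = d ∨ Star w u r r' c d ∨ Star w u r r' d c

/-- The links of the construction, for colors in `Fin w`. -/
def Link (w p q : ℕ) (c d : Fin w) : Prop :=
  BlockLink w (p / (2 * w)) (p % (2 * w)) (q - 2 * w * (p / (2 * w))) c d

theorem time_injective : (time w).Injective := by
  intro p q h
  simp only [time] at h
  split_ifs at h <;> omega

theorem two_mul_le_time (w p : ℕ) : 2 * p ≤ time w p := by
  simp only [time]
  split_ifs <;> omega

theorem time_block_zero (hu : u = 0) (hr : r < 2 * w) :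
    time w (2 * w * u + r) = if r < w then 2 * r else 2 * (4 * w - r) + 1 := by
  rw [hu, mul_zero, zero_add, time, if_pos hr]

theorem time_block (hu : 0 < u) (hr : r < 2 * w) :
    time w (2 * w * u + r) =
      if 0 < r ∧ r < w then 2 * (2 * w * u + r + 2 * w) + 1 else 2 * (2 * w * u + r) := by
  have hblock : 2 * w ≤ 2 * w * u := Nat.le_mul_of_pos_right _ hu
  rw [time, if_neg (by omega), Nat.mul_add_mod, Nat.mod_eq_of_lt hr]

theorem time_block_end (hw : 0 < w) (u : ℕ) :
    time w (2 * w * u + 2 * w) = 2 * (2 * w * u + 2 * w) := by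
  simpa [mul_add] using time_block (w := w) (r := 0) u.succ_pos (by omega)

theorem link_block {c d : Fin w} (hr : r < 2 * w) :
    Link w (2 * w * u + r) (2 * w * u + r') c d ↔ BlockLink w u r r' c d := by
  have hdiv : (2 * w * u + r) / (2 * w) = u := by
    rw [Nat.mul_add_div (by omega), Nat.div_eq_of_lt hr, add_zero]
  rw [Link, hdiv, Nat.mul_add_mod, Nat.mod_eq_of_lt hr, Nat.add_sub_cancel_left]

theorem adjacent_of_blockAdjacent (hr : r < 2 * w) (h : BlockAdjacent w u r r') :
    Adjacent (time w) (2 * w * u + r) (2 * w * u + r') := by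
  have hend : time w (2 * w * u + 2 * w) = 2 * (2 * w * u + 2 * w) := time_block_end (by omega) u
  refine ⟨by unfold BlockAdjacent at h; omega, fun q hrq hqr => ?_⟩
  obtain ⟨s, rfl⟩ := Nat.exists_eq_add_of_le ((Nat.le_add_right _ r).trans hrq.le)
  rcases h with rfl | ⟨hu, hrw, hwr, hr'⟩ | ⟨hu, hrw, rfl⟩
  · omega
  · have hblock : 2 * w * u = 0 := by rw [hu, mul_zero]
    rw [time_block_zero hu hr, time_block_zero hu (r := s) (by omega)]
    rcases hr'.lt_or_eq with hr' | rfl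
    · rw [time_block_zero hu hr']
      split_ifs <;> omega
    · rw [hend]
      split_ifs <;> omega
  · rw [time_block hu hr, time_block hu (r := s) (by omega), time_block hu (r := r') (by omega)]
    split_ifs <;> omega

theorem blockAdjacent_of_adjacent {q : ℕ} (hr : r < 2 * w)
    (h : Adjacent (time w) (2 * w * u + r) q) :
    ∃ r', q = 2 * w * u + r' ∧ BlockAdjacent w u r r' := by
  have hend : time w (2 * w * u + 2 * w) = 2 * (2 * w * u + 2 * w) := time_block_end (by omega) u
  obtain ⟨hlt, hbetween⟩ := h
  have hq : q ≤ 2 * w * u + 2 * w := by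
    by_contra! hq
    have hlater := (hbetween _ (by omega) hq).2
    have htime := two_mul_le_time w q
    omega
  obtain ⟨r', rfl⟩ := Nat.exists_eq_add_of_le ((Nat.le_add_right _ r).trans hlt.le)
  refine ⟨r', rfl, ?_⟩
  have hbetween' : ∀ s, r < s → s < r' → time w (2 * w * u + r) < time w (2 * w * u + s) ∧
      time w (2 * w * u + r') < time w (2 * w * u + s) :=
    fun s hrs hsr => hbetween _ (by omega) (by omega)
  by_contra hnot
  simp only [BlockAdjacent, not_or] at hnot
  have htime := two_mul_le_time w (2 * w * u + r')
  have hsucc := hbetween' (r + 1) (by omega) (by omega)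
  rcases u.eq_zero_or_pos with hu | hu
  · have hblock : 2 * w * u = 0 := by rw [hu, mul_zero]
    rw [time_block_zero hu hr, time_block_zero hu (r := r + 1) (by omega)] at hsucc
    split_ifs at hsucc <;> omega
  · rw [time_block hu (r := r + 1) (by omega)] at hsucc
    have hrw : r + 1 < w := by
      by_contra! hwr
      rw [if_neg (by omega)] at hsucc
      omega
    rcases (show r' ≠ w by omega).lt_or_gt with hr'w | hwr'
    · have hpred := hbetween' (r' - 1) (by omega) (by omega)
      rw [time_block hu (r := r') (by omega), time_block hu (r := r' - 1) (by omega)] at hpred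
      split_ifs at hpred <;> omega
    · have hmid := hbetween' w (by omega) hwr'
      rw [time_block hu (r := w) (by omega), if_neg (by omega)] at hmid
      omega

theorem step_block {c d : Fin w} (hr : r < 2 * w) (hadj : BlockAdjacent w u r r')
    (hlink : BlockLink w u r r' c d) :
    Step (time w) (Link w) (2 * w * u + r, c) (2 * w * u + r', d) :=
  ⟨adjacent_of_blockAdjacent hr hadj, (link_block hr).2 hlink⟩

theorem exists_eq_block (hw : 0 < w) (p : ℕ) : ∃ u r, p = 2 * w * u + r ∧ r < 2 * w :=
  ⟨p / (2 * w), p % (2 * w), (Nat.div_add_mod ..).symm, Nat.mod_lt _ (by omega)⟩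

theorem Reach.mem_of_block_closed {W : Set (ℕ × Fin w)}
    (hW : ∀ u r r' (c d : Fin w), r < 2 * w → BlockAdjacent w u r r' → BlockLink w u r r' c d →
      (2 * w * u + r, c) ∈ W → (2 * w * u + r', d) ∈ W)
    {v v' : ℕ × Fin w} (h : Reach (time w) (Link w) v v') (hv : v ∈ W) : v' ∈ W := by
  refine h.mem_of_closed (fun ⟨p, c⟩ ⟨q, d⟩ hstep hp => ?_) hv
  obtain ⟨u, r, rfl, hr⟩ := exists_eq_block (Fin.pos c) p
  obtain ⟨r', rfl, hadj⟩ := blockAdjacent_of_adjacent hr hstep.1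
  exact hW u r r' c d hr hadj ((link_block hr).1 hstep.2) hp

theorem isCoherent_link (w : ℕ) : IsCoherent (time w) (Link w) where
  refl _ _ _ := Or.inl rfl
  symm h := h.imp Eq.symm Or.symm
  comp {p a q b c d} hpa haq hpq hbc hcd := by
    obtain ⟨u, r, rfl, hr⟩ := exists_eq_block (Fin.pos b) p
    obtain ⟨s, rfl, -⟩ := blockAdjacent_of_adjacent hr hpa
    obtain ⟨r', rfl, hrr'⟩ := blockAdjacent_of_adjacent hr hpq
    have hlt : r < s ∧ s < r' := ⟨by simpa using hpa.1, by simpa using haq.1⟩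
    have hs : s < 2 * w := by unfold BlockAdjacent at hrr'; omega
    rw [link_block hr] at hbc ⊢
    rw [link_block hs] at hcd
    rcases hrr' with _ | ⟨hu, hrw, hr'⟩ | ⟨hu, hrw, hr'⟩
    · omega
    · have hstar : ∀ c d, Star w u r s c d → Star w u r r' c d := by
        unfold Star
        omega
      have hnot : ∀ c d, ¬ Star w u s r' c d := by
        unfold Star
        omega
      obtain rfl : c = d := Fin.ext (hcd.resolve_right (by simp [hnot]))
      exact hbc.imp_right (Or.imp (hstar _ _) (hstar _ _))
    · have hstar : ∀ c d, Star w u s r' c d → Star w u r r' c d := by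
        unfold Star
        omega
      have hnot : ∀ c d, ¬ Star w u r s c d := by
        unfold Star
        omega
      obtain rfl : b = c := Fin.ext (hbc.resolve_right (by simp [hnot]))
      exact hcd.imp_right (Or.imp (hstar _ _) (hstar _ _))

/-- An up-set containing the upper leg of the ladder and missing the lower leg. -/
def upperVertices (w : ℕ) : Set (ℕ × Fin w) :=
  {v | (2 * v.2 + 1) * w ≤ v.1}

theorem mem_upperVertices_block {c : Fin w} (hr : r ≤ 2 * w) :
    (2 * w * u + r, c) ∈ upperVertices w ↔ c < u ∨ (c = u ∧ w ≤ r) := by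
  have hw : 0 < w := Fin.pos c
  have hlow : c < u → (2 * c + 2) * w ≤ 2 * w * u := fun h => by nlinarith
  have hmid : (2 * u + 1) * w = 2 * w * u + w := by ring
  have hhigh : u < c → 2 * w * u + 3 * w ≤ (2 * c + 1) * w := fun h => by nlinarith
  have hadd : (2 * c + 2) * w = (2 * c + 1) * w + w := by ring
  simp only [upperVertices, Set.mem_ofPred_eq]
  rcases lt_trichotomy (c : ℕ) u with h | h | h
  · omega
  · rw [h]; omega
  · omega

theorem upperVertices_closed {c d : Fin w} (hadj : BlockAdjacent w u r r')
    (hlink : BlockLink w u r r' c d) (hc : c < u ∨ (c = u ∧ w ≤ r)) :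
    d < u ∨ (d = u ∧ w ≤ r') := by
  unfold BlockAdjacent BlockLink Star at *
  omega

theorem Reach.mem_upperVertices {v v' : ℕ × Fin w} (h : Reach (time w) (Link w) v v')
    (hv : v ∈ upperVertices w) : v' ∈ upperVertices w := by
  refine h.mem_of_block_closed (fun u r r' c d hr hadj hlink hc => ?_) hv
  have hr' : r' ≤ 2 * w := by unfold BlockAdjacent at hadj; omega
  rw [mem_upperVertices_block hr.le] at hc
  exact (mem_upperVertices_block hr').2 (upperVertices_closed hadj hlink hc)

/-- The number of rungs of the ladder in block `u`. -/
def rungCount (w u : ℕ) : ℕ :=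
  if u = 0 then w else u + 1

/-- The lower vertex of the rung with index `i` in block `u`. -/
def lower (hw : 2 ≤ w) (u : Fin w) (i : ℕ) : ℕ × Fin w :=
  (2 * w * u + i, ⟨max u 1, by omega⟩)

/-- The upper vertex of the rung with index `i` in block `u`. -/
def upper (hw : 2 ≤ w) (u : Fin w) (i : ℕ) : ℕ × Fin w :=
  (2 * w * u + (w + i), ⟨0, by omega⟩)

theorem rungCount_le (u : Fin w) : rungCount w u ≤ w := by
  unfold rungCount
  split_ifs <;> omega

theorem reach_vertical (c : Fin w) (h : r ≤ r') :
    Reach (time w) (Link w) (2 * w * u + r, c) (2 * w * u + r', c) :=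
  (isCoherent_link w).reach_of_le (by omega) c

end Construction

section Ladder

variable {w u r r' : ℕ} {c d : Fin w}

theorem Reach.of_block_closed {W : ℕ → ℕ → Prop} {s : ℕ} (hs : s < 2 * w)
    (hW : ∀ r r' c d, r' ≤ s → BlockAdjacent w u r r' → BlockLink w u r r' c d → W r c → W r' d)
    (h : Reach (time w) (Link w) (2 * w * u + r, c) (2 * w * u + s, d)) (hc : W r c) : W s d := by
  have hrs : r ≤ s := by simpa using h.level_le
  let V : Set (ℕ × Fin w) := {v | 2 * w * u + s < v.1 ∨ ∃ r ≤ s, v.1 = 2 * w * u + r ∧ W r v.2}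
  have hmem : (2 * w * u + s, d) ∈ V := by
    refine h.mem_of_closed (fun ⟨p, c⟩ ⟨q, d⟩ hstep hp => ?_) (.inr ⟨r, hrs, rfl, hc⟩)
    rcases hp with hlt | ⟨r, hr, rfl, hc⟩
    · exact .inl (lt_trans hlt hstep.1.1)
    obtain ⟨r', rfl, hadj⟩ := blockAdjacent_of_adjacent (by omega) hstep.1
    refine (lt_or_ge s r').imp (fun h => by simpa using h) fun hr's => ⟨r', hr's, rfl, ?_⟩
    exact hW r r' c d hr's hadj ((link_block (by omega)).1 hstep.2) hc
  obtain ⟨s', -, heq, hW⟩ := hmem.resolve_left (lt_irrefl _)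
  rwa [Nat.add_left_cancel heq]

theorem step_base_leaf (hu : u = 0) (hr : r + 1 < w) (hc : (c : ℕ) = 1)
    (hd : r = 0 ∧ (d : ℕ) = 0 ∨ 0 < r ∧ d + r = w) :
    Step (time w) (Link w) (2 * w * u + r, c) (2 * w * u + (r + 1), d) :=
  step_block (by omega) (.inl rfl) (.inr (.inl (.inl ⟨hu, .inl ⟨rfl, hr, hc, hd⟩⟩)))

theorem step_base_jump (hu : u = 0) (hr : r + 1 = w) (hwr : w ≤ r') (hr' : r' ≤ 2 * w)
    (hc : (c : ℕ) = 0 ∨ 2 * w ≤ c + r') (hd : (d : ℕ) = 0) :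
    Step (time w) (Link w) (2 * w * u + r, c) (2 * w * u + r', d) :=
  step_block (by omega) (.inr (.inl ⟨hu, hr, hwr, hr'⟩)) <| hc.imp (·.trans hd.symm) fun hc =>
    .inr (.inl ⟨hu, .inr ⟨hr, hwr, hd, hc⟩⟩)

theorem step_phase_jump (hu : 0 < u) (hr : r < w) (hc : (c : ℕ) = u)
    (hd : r ≤ d ∧ d < u ∨ (d : ℕ) = u + 1) :
    Step (time w) (Link w) (2 * w * u + r, c) (2 * w * u + w, d) :=
  step_block (by omega) (.inr (.inr ⟨hu, hr, rfl⟩))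
    (.inr (.inl (.inr ⟨hu, .inl ⟨hr, rfl, hc, hd⟩⟩)))

theorem step_phase_leaf (hu : 0 < u) (hc : 0 < (c : ℕ)) (hcu : c ≤ u) (hr : r + 1 = w + c)
    (hd : (d : ℕ) = 0) :
    Step (time w) (Link w) (2 * w * u + r, c) (2 * w * u + (r + 1), d) :=
  step_block (by omega) (.inl rfl)
    (.inr (.inr (.inr ⟨hu, .inr ⟨by omega, rfl, by omega, hd, by omega, hc, hcu⟩⟩)))

theorem reach_next_block (hc : (c : ℕ) = max u 1) (hd : (d : ℕ) = u + 1) (hr : r < w) :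
    Reach (time w) (Link w) (2 * w * u + r, c) (2 * w * (u + 1), d) := by
  have hend : Reach (time w) (Link w) (2 * w * u + w, d) (2 * w * (u + 1), d) :=
    reach_vertical (r' := 2 * w) d (by omega)
  rcases u.eq_zero_or_pos with hu | hu
  · obtain rfl : c = d := Fin.ext (by omega)
    exact (reach_vertical c hr.le).trans hend
  · exact .head (step_phase_jump hu hr (by omega) (.inr hd)) hend

variable {i j : ℕ} {u v : Fin w} {hw : 2 ≤ w}

theorem level_lt (h : u < v ∨ u = v ∧ i < j) (hi : i < 2 * w) : 2 * w * u + i < 2 * w * v + j := by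
  rcases h with h | ⟨rfl, h⟩
  · have hblock : 2 * w * u + 2 * w ≤ 2 * w * v := Nat.mul_le_mul_left (2 * w) (Fin.lt_def.1 h)
    omega
  · omega

theorem upper_level_lt (h : u < v ∨ u = v ∧ i < j) (hi : i < w) :
    (upper hw u i).1 < (upper hw v j).1 :=
  level_lt (h.imp_right (.imp_right fun h => by omega)) (by omega)

theorem upper_level_lt_mul (u : Fin w) (hi : i < w) : (upper hw u i).1 < 2 * w * w := by
  have hblock : 2 * w * u + 2 * w ≤ 2 * w * w := Nat.mul_le_mul_left (2 * w) u.2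
  simp only [upper]
  omega

theorem lower_level_lt_upper (u : Fin w) (i : ℕ) : (lower hw u i).1 < (upper hw u i).1 := by
  simp only [lower, upper]
  omega

theorem reach_lower_of_block_lt (hi : i < w) (h : u < v) :
    Reach (time w) (Link w) (lower hw u i) (lower hw v j) := by
  suffices hstart : ∀ k, (u : ℕ) + 1 ≤ k → ∀ d : Fin w, (d : ℕ) = k →
      Reach (time w) (Link w) (lower hw u i) (2 * w * k, d) from
    (hstart v h _ (by simp; omega)).trans (reach_vertical (r := 0) _ j.zero_le)
  intro k hk
  induction k, hk using Nat.le_induction with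
  | base => exact fun d hd => reach_next_block rfl hd hi
  | succ k hk ih =>
    intro d hd
    exact (ih ⟨k, by omega⟩ rfl).trans (reach_next_block (r := 0) (by simp; omega) hd (by omega))

theorem lower_reach_upper_of_base (hu : (u : ℕ) = 0) (hi : i < w) :
    Reach (time w) (Link w) (lower hw u i) (upper hw u i) := by
  have hjump : ∀ c : Fin w, (c : ℕ) = 0 ∨ w ≤ c + i →
      Step (time w) (Link w) (2 * w * u + (w - 1), c) (upper hw u i) := fun c hc =>
    step_base_jump hu (by omega) (by omega) (by omega) (by omega) rfl
  have hcenter : (lower hw u i).2 = (1 : ℕ) := by simp [lower, hu]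
  rcases (Nat.le_sub_one_of_lt hi).eq_or_lt with rfl | hiw
  · exact .single (hjump (lower hw u (w - 1)).2 (by omega))
  · obtain ⟨c, hc⟩ : ∃ c : Fin w, i = 0 ∧ (c : ℕ) = 0 ∨ 0 < i ∧ c + i = w := by
      rcases i.eq_zero_or_pos with h | h
      · exact ⟨⟨0, by omega⟩, .inl ⟨h, rfl⟩⟩
      · exact ⟨⟨w - i, by omega⟩, .inr ⟨h, by simp; omega⟩⟩
    have hleaf : Step (time w) (Link w) (lower hw u i) (2 * w * u + (i + 1), c) :=
      step_base_leaf hu (by omega) hcenter hc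
    exact .head hleaf ((reach_vertical c (by omega)).tail (hjump c (by omega)))

theorem lower_reach_upper_of_phase (hu : 0 < (u : ℕ)) (hi : i ≤ u) :
    Reach (time w) (Link w) (lower hw u i) (upper hw u i) := by
  let c : Fin w := ⟨i, by omega⟩
  have hcenter : (lower hw u i).2 = u := Fin.ext (by simp [lower]; omega)
  have hswitch : Reach (time w) (Link w) (lower hw u i) (2 * w * u + w, c) := by
    rcases hi.eq_or_lt with hiu | hiu
    · have hcu : (lower hw u i).2 = c := hcenter.trans (Fin.ext hiu.symm)
      exact hcu ▸ reach_vertical (lower hw u i).2 (by omega)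
    · exact .single (step_phase_jump hu (by omega) (congrArg Fin.val hcenter) (.inl ⟨le_rfl, hiu⟩))
  rcases i.eq_zero_or_pos with rfl | hi0
  · exact hswitch
  · have hleaf : Step (time w) (Link w) (2 * w * u + (w + i - 1), c) (upper hw u i) := by
      have hlevel : w + i - 1 + 1 = w + i := by omega
      rw [upper, ← hlevel]
      exact step_phase_leaf hu hi0 hi hlevel rfl
    exact (hswitch.trans (reach_vertical c (by omega))).tail hleaf

theorem not_lower_reach_upper_of_base (hu : (u : ℕ) = 0) (hij : i < j) (hj : j < w) :
    ¬ Reach (time w) (Link w) (lower hw u j) (upper hw u i) := by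
  intro h
  have := h.of_block_closed (W := fun r c => i < r ∧ 0 < c ∧ c + i < w) (by omega)
    (fun r r' c d hr' hadj hlink hc => by
      unfold BlockAdjacent BlockLink Star at *
      omega) (by simp; omega)
  exact absurd this.2.1 (lt_irrefl _)

theorem not_lower_reach_upper_of_phase (hu : 0 < (u : ℕ)) (hij : i < j) (hj : j ≤ u) :
    ¬ Reach (time w) (Link w) (lower hw u j) (upper hw u i) := by
  intro h
  have := h.of_block_closed
    (W := fun r c => i < r ∧ r < w ∧ c = u ∨ w ≤ r ∧ i < c) (by omega)
    (fun r r' c d hr' hadj hlink hc => by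
      unfold BlockAdjacent BlockLink Star at *
      omega) (by simp; omega)
  simp only at this
  omega

theorem lower_reach_upper (hi : i < rungCount w u) :
    Reach (time w) (Link w) (lower hw u i) (upper hw u i) := by
  rcases (u : ℕ).eq_zero_or_pos with hu | hu
  · exact lower_reach_upper_of_base hu (hi.trans_le (rungCount_le u))
  · exact lower_reach_upper_of_phase hu (by rw [rungCount, if_neg hu.ne'] at hi; omega)

theorem reach_lower (h : u < v ∨ u = v ∧ i < j) (hi : i < w) :
    Reach (time w) (Link w) (lower hw u i) (lower hw v j) := by
  rcases h with h | ⟨rfl, h⟩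
  · exact reach_lower_of_block_lt hi h
  · exact reach_vertical _ h.le

theorem reach_upper (h : u < v ∨ u = v ∧ i < j) (hi : i < w) :
    Reach (time w) (Link w) (upper hw u i) (upper hw v j) :=
  (isCoherent_link w).reach_of_le (upper_level_lt (hw := hw) h hi).le _

theorem not_lower_reach_upper (h : u < v ∨ u = v ∧ i < j) (hi : i < w) (hj : j < rungCount w v) :
    ¬ Reach (time w) (Link w) (lower hw v j) (upper hw u i) := by
  rcases h with h | ⟨rfl, h⟩
  · exact fun hle => (level_lt (.inl h) (by omega)).not_ge hle.level_le
  rcases (u : ℕ).eq_zero_or_pos with hu | hu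
  · exact not_lower_reach_upper_of_base hu h (hj.trans_le (rungCount_le u))
  · exact not_lower_reach_upper_of_phase hu h (by rw [rungCount, if_neg hu.ne'] at hj; omega)

theorem not_upper_reach_lower (hi : i < w) (hj : j < w) :
    ¬ Reach (time w) (Link w) (upper hw u i) (lower hw v j) := by
  intro h
  have hupper : upper hw u i ∈ upperVertices w :=
    (mem_upperVertices_block (by omega)).2 (by simp; omega)
  have hlower : lower hw v j ∉ upperVertices w :=
    (mem_upperVertices_block (by omega)).not.2 (by simp; omega)
  exact hlower (h.mem_upperVertices hupper)

/-- The rungs of the ladder, from bottom to top. -/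
abbrev Rung (w : ℕ) :=
  Σₗ u : Fin w, Fin (rungCount w u)

theorem card_rung (hw : 0 < w) : 2 * Fintype.card (Rung w) + 2 = w * (w + 3) := by
  obtain ⟨k, rfl⟩ := Nat.exists_eq_succ_of_ne_zero hw.ne'
  have hsum : 2 * ∑ u ∈ Finset.range k, (u + 2) = k * (k + 3) := by
    induction k with
    | zero => rfl
    | succ k ih => rw [Finset.sum_range_succ, mul_add, ih (by omega)]; ring
  have hcard : Fintype.card (Rung (k + 1)) = ∑ u ∈ Finset.range k, (u + 2) + (k + 1) := by
    calc Fintype.card (Rung (k + 1)) = ∑ u : Fin (k + 1), rungCount (k + 1) u :=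
          Fintype.card_sigma.trans (by simp only [Fintype.card_fin])
      _ = ∑ u ∈ Finset.range (k + 1), rungCount (k + 1) u := Fin.sum_univ_eq_sum_range ..
      _ = ∑ u ∈ Finset.range k, (u + 2) + (k + 1) := by
          simp [Finset.sum_range_succ', rungCount]
  rw [hcard]
  linarith

theorem Rung.lt_cases {ρ σ : Rung w} (h : ρ < σ) :
    ρ.1 < σ.1 ∨ ρ.1 = σ.1 ∧ (ρ.2 : ℕ) < σ.2 := by
  rcases h with ⟨_, _, h⟩ | ⟨_, _, h⟩
  exacts [.inl h, .inr ⟨rfl, h⟩]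

theorem exists_isLadderIn_reach (hw : 2 ≤ w) {m : ℕ} (hm : m < w * (w + 3) / 2) :
    ∃ x y : Fin m → ℕ × Fin w, IsLadderIn (Reach (time w) (Link w)) x y ∧
      (∀ i, (x i).1 < 2 * w * w) ∧ ∀ i, (y i).1 < 2 * w * w := by
  have hcard : m ≤ (Finset.univ : Finset (Rung w)).card := by
    have := card_rung (w := w) (by omega)
    rw [Finset.card_univ]
    omega
  let ρ : Fin m ↪o Rung w := Finset.univ.orderEmbOfCardLe hcard
  have hρ : ∀ i, ((ρ i).2 : ℕ) < w := fun i => (ρ i).2.2.trans_le (rungCount_le _)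
  have htop : ∀ i, (upper hw (ρ i).1 (ρ i).2).1 < 2 * w * w := fun i => upper_level_lt_mul _ (hρ i)
  have hlt : ∀ {i j}, i < j → _ := fun h => Rung.lt_cases (ρ.strictMono h)
  have hne : ∀ {v v' : ℕ × Fin w}, v.1 < v'.1 → v ≠ v' := fun h h' => h.ne (congrArg _ h')
  refine ⟨fun i => lower hw (ρ i).1 (ρ i).2, fun i => upper hw (ρ i).1 (ρ i).2,
    ⟨fun i j h => ?_, fun i j h => ?_, fun i => ?_, fun i j h => ?_⟩,
    fun i => (lower_level_lt_upper _ _).trans (htop i), htop⟩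
  · exact ⟨reach_lower (hlt h) (hρ i), hne (level_lt (hlt h) ((hρ i).trans (by omega)))⟩
  · exact ⟨reach_upper (hlt h) (hρ i), hne (upper_level_lt (hlt h) (hρ i))⟩
  · exact ⟨lower_reach_upper (ρ i).2.2, hne (lower_level_lt_upper _ _)⟩
  · exact ⟨not_upper_reach_lower (hρ i) (hρ j), not_lower_reach_upper (hlt h) (hρ i) (ρ j).2.2⟩

end Ladder

end LayeredPoset

open LayeredPoset in
theorem stmt_14_general (w : ℕ) (hw : 2 ≤ w) (m : ℕ) (hm : m < w * (w + 3) / 2) :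
    ∃ (N n : ℕ) (le : Fin N → Fin N → Prop) (A : Fin n → Finset (Fin N)) (x y : Fin m → Fin N),
      IsPartialOrder (Fin N) le ∧ IsRegularPoset le w A ∧ IsLadderIn le x y := by
  have hw0 : NeZero w := ⟨by omega⟩
  obtain ⟨x, y, hladder, hx, hy⟩ := exists_isLadderIn_reach hw hm
  refine exists_isRegularPoset_isLadderIn (isCoherent_link w) time_injective
    (s := Finset.range (2 * w * w)) ?_ (Finset.nonempty_range_iff.2 (by positivity)) hladder
    (fun i => Finset.mem_range.2 (hx i)) (fun i => Finset.mem_range.2 (hy i))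
  rw [Finset.coe_range]
  exact Set.ordConnected_Iio

/-- for each `w ≥ 2` there is a regular poset of width `w`
containing an induced copy of the ladder `L_{w·⌊(w+2)/2⌋}`. -/
theorem stmt_14 (w : ℕ) (hw : 2 ≤ w) :
    ∃ (N n : ℕ) (le : Fin N → Fin N → Prop) (A : Fin n → Finset (Fin N))
      (x y : Fin (w * ((w + 2) / 2)) → Fin N),
      IsPartialOrder (Fin N) le ∧ IsRegularPoset le w A ∧
      IsLadderIn le x y := by
  refine stmt_14_general w hw _ ((Nat.lt_div_iff_mul_lt two_pos).2 ?_)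
  have hhalf : w * ((w + 2) / 2) * 2 ≤ w * (w + 2) := by
    rw [mul_assoc]
    exact Nat.mul_le_mul_left w (Nat.div_mul_le_self _ _)
  have hgap : w * (w + 2) + w = w * (w + 3) := by ring
  omega
end

section
/- For all positive integers m and w with m > 1, there exists a finite L_m-free poset of width w admitting an n-Grundy coloring with n ≥ w^{lg(m−1)}/(m−1), where lg denotes the base-2 logarithm. Equivalently, First-Fit can be forced to use at least w^{lg(m−1)}/(m−1) chains on some L_m-free on-line poset of width w. -/
/-!
The extremal posets are lexicographic powers of a width-two poset on which First-Fit uses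
`k = m - 1` colors. Widths and Grundy colorings multiply under lexicographic products, so the
`t`-th power has width at most `2 ^ t` and `k ^ t` colors, and `t = ⌊lg w⌋` gives the exponent.

Ladders are controlled through the ladder with its least and greatest vertex removed: this
half-ladder is indecomposable (its only modules are trivial), so a copy of it in a lexicographic
product either lies in a single fibre or projects injectively to the base, and avoiding it is
inherited by products. Placing an antichain of size `w` on top makes the width exactly `w`. It
creates no ladder, since every vertex of a half-ladder inside a ladder lies strictly below some
vertex, hence is not in the top antichain.
-/

section Embeddings

variable {α β : Type*} {r : α → α → Prop} {s : β → β → Prop}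

/-- The upper-bound half of `IsWidth`: the poset `(α, r)` has width at most `w`. -/
def WidthLE (r : α → α → Prop) (w : ℕ) : Prop :=
  ∀ S : Finset α, IsAntichainOn r S → S.card ≤ w

theorem WidthLE.mono {w w' : ℕ} (h : WidthLE r w) (hw : w ≤ w') : WidthLE r w' :=
  fun S hS => (h S hS).trans hw

theorem IsAntichainOn.map (f : r ↪r s) {S : Finset α} (hS : IsAntichainOn r S) :
    IsAntichainOn s (S.map f.toEmbedding) := by
  simp only [IsAntichainOn, Finset.mem_map]
  rintro _ ⟨a, ha, rfl⟩ _ ⟨b, hb, rfl⟩ hab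
  have hne : a ≠ b := fun h => hab (congrArg _ h)
  exact (hS a ha b hb hne).imp (mt f.map_rel_iff.1) (mt f.map_rel_iff.1)

theorem WidthLE.of_relEmbedding {w : ℕ} (f : r ↪r s) (h : WidthLE s w) : WidthLE r w :=
  fun _ hS => (Finset.card_map f.toEmbedding).symm.trans_le (h _ (hS.map f))

theorem IsWidth.of_relIso {w : ℕ} (e : r ≃r s) (h : IsWidth s w) : IsWidth r w := by
  obtain ⟨⟨S, hS, hcard⟩, hle⟩ := h
  exact ⟨⟨_, hS.map e.symm.toRelEmbedding, (Finset.card_map _).trans hcard⟩,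
    WidthLE.of_relEmbedding e.toRelEmbedding hle⟩

theorem LFree.of_relEmbedding {m : ℕ} (f : r ↪r s) (h : LFree s m) : LFree r m := by
  rintro ⟨x, y, hx, hy, hxy, hinc⟩
  have rel {a b : α} (hab : r a b ∧ a ≠ b) : s (f a) (f b) ∧ f a ≠ f b :=
    ⟨f.map_rel_iff.2 hab.1, f.injective.ne hab.2⟩
  exact h ⟨f ∘ x, f ∘ y, fun i j hij => rel (hx i j hij), fun i j hij => rel (hy i j hij),
    fun i => rel (hxy i), fun i j hij =>
      (hinc i j hij).imp (mt f.map_rel_iff.1) (mt f.map_rel_iff.1)⟩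

theorem IsGrundy.comp_relIso {n : ℕ} {g : β → ℕ} (e : r ≃r s) (h : IsGrundy s n g) :
    IsGrundy r n (g ∘ e) := by
  obtain ⟨hrange, hsurj, hchain, hwit⟩ := h
  refine ⟨fun v => hrange (e v), fun i hi hin => ?_,
    fun u v huv => (hchain _ _ huv).imp e.map_rel_iff.1 e.map_rel_iff.1, fun v i hi hiv => ?_⟩
  · obtain ⟨b, rfl⟩ := hsurj i hi hin
    exact ⟨e.symm b, congrArg g (e.apply_symm_apply b)⟩
  · obtain ⟨b, hb, rfl⟩ := hwit (e v) i hi hiv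
    obtain ⟨u, rfl⟩ := e.surjective b
    exact ⟨u, hb.imp (mt e.map_rel_iff.2) (mt e.map_rel_iff.2), rfl⟩

end Embeddings

section GrundyColoring

variable {α κ : Type*} {r : α → α → Prop}

/-- `g` is a Grundy coloring of `(α, r)` using all colors of `κ`. In contrast to `IsGrundy` the
colors range over an arbitrary order, so that pairs of colors can color a product. -/
structure IsGrundyColoring [LT κ] (r : α → α → Prop) (g : α → κ) : Prop where
  surjective : Function.Surjective g
  not_incompRel : ∀ ⦃u v⦄, g u = g v → ¬ IncompRel r u v
  exists_incompRel : ∀ ⦃v i⦄, i < g v → ∃ u, IncompRel r u v ∧ g u = i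

theorem IsGrundyColoring.comp_orderIso {μ : Type*} [Preorder κ] [Preorder μ] {g : α → κ}
    (h : IsGrundyColoring r g) (e : κ ≃o μ) : IsGrundyColoring r (e ∘ g) where
  surjective := e.surjective.comp h.surjective
  not_incompRel _ _ huv := h.not_incompRel (e.injective huv)
  exists_incompRel v i hi := by
    obtain ⟨u, hu, hgu⟩ := h.exists_incompRel (e.symm_apply_lt.2 hi)
    exact ⟨u, hu, e.symm_apply_eq.1 hgu.symm |>.symm⟩

theorem IsGrundyColoring.isGrundy {n : ℕ} {g : α → Fin n} (h : IsGrundyColoring r g) :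
    IsGrundy r n (fun v => g v + 1) := by
  refine ⟨fun v => ⟨Nat.le_add_left 1 _, (g v).isLt⟩, fun i hi hin => ?_,
    fun u v huv => ?_, fun v i hi hiv => ?_⟩
  · obtain ⟨v, hv⟩ := h.surjective ⟨i - 1, by lia⟩
    exact ⟨v, by simp only [hv]; lia⟩
  · have hcolor : g u = g v := Fin.ext (Nat.succ_injective huv)
    simpa only [IncompRel, not_and_or, not_not] using h.not_incompRel hcolor
  · have hlt : (⟨i - 1, by lia⟩ : Fin n) < g v := Fin.lt_def.2 (by dsimp only; lia)
    obtain ⟨u, hu, hgu⟩ := h.exists_incompRel hlt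
    exact ⟨u, hu, by simp only [hgu]; lia⟩

end GrundyColoring

section LexProduct

variable {α β : Type*} {r : α → α → Prop} {s : β → β → Prop}

theorem isPartialOrder_lexLe [IsPartialOrder α r] [IsPartialOrder β s] :
    IsPartialOrder (α × β) (LexLe r s) where
  refl p := Or.inr ⟨rfl, refl_of s p.2⟩
  trans := by
    rintro ⟨a, a'⟩ ⟨b, b'⟩ ⟨c, c'⟩ (⟨hab, hne⟩ | ⟨rfl, hab'⟩) (⟨hbc, hne'⟩ | ⟨rfl, hbc'⟩)
    · refine Or.inl ⟨trans_of r hab hbc, ?_⟩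
      rintro rfl
      exact hne (antisymm_of r hab hbc)
    · exact Or.inl ⟨hab, hne⟩
    · exact Or.inl ⟨hbc, hne'⟩
    · exact Or.inr ⟨rfl, trans_of s hab' hbc'⟩
  antisymm := by
    rintro ⟨a, a'⟩ ⟨b, b'⟩ (⟨hab, hne⟩ | ⟨rfl, hab'⟩) (⟨hba, hne'⟩ | ⟨heq, hba'⟩)
    · exact absurd (antisymm_of r hab hba) hne
    · exact absurd heq.symm hne
    · exact absurd rfl hne'
    · exact congrArg _ (antisymm_of s hab' hba')

theorem lexLe_iff_of_fst_ne {p q : α × β} (h : p.1 ≠ q.1) : LexLe r s p q ↔ r p.1 q.1 := by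
  simp [LexLe, h]

theorem lexLe_iff_of_fst_eq {p q : α × β} (h : p.1 = q.1) : LexLe r s p q ↔ s p.2 q.2 := by
  simp [LexLe, h]

theorem incompRel_lexLe_iff [Std.Refl r] {p q : α × β} :
    IncompRel (LexLe r s) p q ↔
      IncompRel r p.1 q.1 ∨ p.1 = q.1 ∧ IncompRel s p.2 q.2 := by
  by_cases h : p.1 = q.1
  · rw [or_iff_right fun hinc => hinc.ne h, and_iff_right h]
    exact and_congr (not_congr (lexLe_iff_of_fst_eq h)) (not_congr (lexLe_iff_of_fst_eq h.symm))
  · rw [or_iff_left fun heq => h heq.1]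
    exact and_congr (not_congr (lexLe_iff_of_fst_ne h))
      (not_congr (lexLe_iff_of_fst_ne (Ne.symm h)))

theorem WidthLE.lexLe [Std.Refl r] {w w' : ℕ} (hr : WidthLE r w) (hs : WidthLE s w') :
    WidthLE (LexLe r s) (w * w') := by
  classical
  intro S hS
  have incomp {p q : α × β} (hp : p ∈ S) (hq : q ∈ S) (hpq : p ≠ q) :
      IncompRel r p.1 q.1 ∨ p.1 = q.1 ∧ IncompRel s p.2 q.2 :=
    incompRel_lexLe_iff.1 (hS p hp q hq hpq)
  have card_base : (S.image Prod.fst).card ≤ w := by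
    refine hr _ ?_
    simp only [IsAntichainOn, Finset.mem_image]
    rintro _ ⟨p, hp, rfl⟩ _ ⟨q, hq, rfl⟩ hne
    exact (incomp hp hq (fun h => hne (congrArg _ h))).resolve_right (fun h => hne h.1)
  have card_fibre (a : α) : (S.filter (·.1 = a)).card ≤ w' := by
    have snd_injOn : Set.InjOn Prod.snd (S.filter (·.1 = a) : Set (α × β)) := by
      rintro p hp q hq hpq
      have hpa : p.1 = a := (Finset.mem_filter.1 hp).2
      have hqa : q.1 = a := (Finset.mem_filter.1 hq).2
      exact Prod.ext (hpa.trans hqa.symm) hpq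
    rw [← Finset.card_image_of_injOn snd_injOn]
    refine hs _ ?_
    simp only [IsAntichainOn, Finset.mem_image, Finset.mem_filter]
    rintro _ ⟨p, ⟨hp, hpa⟩, rfl⟩ _ ⟨q, ⟨hq, hqa⟩, rfl⟩ hne
    exact ((incomp hp hq (fun h => hne (congrArg _ h))).resolve_left
      (fun h => h.ne (hpa.trans hqa.symm))).2
  calc S.card ≤ w' * (S.image Prod.fst).card :=
        Finset.card_le_mul_card_image S w' fun a _ => card_fibre a
    _ ≤ w * w' := by rw [mul_comm w]; exact Nat.mul_le_mul_left w' card_base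

theorem IsGrundyColoring.lexLe {κ μ : Type*} [LT κ] [LT μ] [Std.Refl r] {g : α → κ} {g' : β → μ}
    (hg : IsGrundyColoring r g) (hg' : IsGrundyColoring s g') :
    IsGrundyColoring (LexLe r s) (fun p => toLex (g p.1, g' p.2)) where
  surjective c := by
    obtain ⟨a, ha⟩ := hg.surjective (ofLex c).1
    obtain ⟨b, hb⟩ := hg'.surjective (ofLex c).2
    exact ⟨(a, b), by simp [ha, hb]⟩
  not_incompRel p q hpq hinc := by
    obtain ⟨hfst, hsnd⟩ := Prod.ext_iff.1 (toLex.injective hpq)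
    rcases incompRel_lexLe_iff.1 hinc with h | ⟨-, h⟩
    · exact hg.not_incompRel hfst h
    · exact hg'.not_incompRel hsnd h
  exists_incompRel p c hc := by
    rcases Prod.Lex.lt_iff.1 hc with hlt | ⟨heq, hlt⟩
    · obtain ⟨a, ha, hga⟩ := hg.exists_incompRel hlt
      obtain ⟨b, hgb⟩ := hg'.surjective (ofLex c).2
      exact ⟨(a, b), incompRel_lexLe_iff.2 (Or.inl ha), by simp [hga, hgb]⟩
    · obtain ⟨b, hb, hgb⟩ := hg'.exists_incompRel hlt
      have hfst : g p.1 = (ofLex c).1 := heq.symm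
      exact ⟨(p.1, b), incompRel_lexLe_iff.2 (Or.inr ⟨rfl, hb⟩), by simp [hfst, hgb]⟩

end LexProduct

section Modules

variable {α β γ : Type*}

/-- The classes of `c` are modules of the relation `r`: no element outside a class distinguishes
two elements of the class. -/
def IsModularPartition (r : α → α → Prop) (c : Setoid α) : Prop :=
  ∀ ⦃u v x⦄, c u v → ¬ c u x → (r u x ↔ r v x) ∧ (r x u ↔ r x v)

/-- `r` is indecomposable (or prime) in the sense of modular decomposition: only the two trivial
partitions of its vertices are modular. -/
def IsIndecomposable (r : α → α → Prop) : Prop :=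
  ∀ c : Setoid α, IsModularPartition r c → c = ⊥ ∨ c = ⊤

theorem IsModularPartition.of_incompRel {r : α → α → Prop} {c : Setoid α}
    (hc : IsModularPartition r c) {u v x : α} (huv : c u v) (hu : IncompRel r u x)
    (hv : ¬ IncompRel r v x) : c u x := by
  by_contra hux
  obtain ⟨hux_iff, hxu_iff⟩ := hc huv hux
  exact hv ⟨mt hux_iff.2 hu.1, mt hxu_iff.2 hu.2⟩

variable {r : α → α → Prop} {s : β → β → Prop} {t : γ → γ → Prop}

theorem isModularPartition_ker_fst (f : t ↪r LexLe r s) :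
    IsModularPartition t (Setoid.ker (Prod.fst ∘ f)) := by
  intro u v x huv hux
  have huv : (f u).1 = (f v).1 := huv
  have hux : (f u).1 ≠ (f x).1 := hux
  have hvx : (f v).1 ≠ (f x).1 := huv ▸ hux
  simp only [← f.map_rel_iff, lexLe_iff_of_fst_ne hux, lexLe_iff_of_fst_ne hux.symm,
    lexLe_iff_of_fst_ne hvx, lexLe_iff_of_fst_ne hvx.symm, huv, and_self]

theorem IsIndecomposable.isEmpty_relEmbedding_lexLe [Std.Refl r] [Std.Refl s]
    (ht : IsIndecomposable t) (hr : IsEmpty (t ↪r r)) (hs : IsEmpty (t ↪r s)) :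
    IsEmpty (t ↪r LexLe r s) := by
  refine ⟨fun f => ?_⟩
  rcases ht _ (isModularPartition_ker_fst f) with hbot | htop
  · have inj : Function.Injective (Prod.fst ∘ f) := (Setoid.injective_iff_ker_bot _).2 hbot
    refine hr.false ⟨⟨_, inj⟩, fun {u v} => ?_⟩
    rw [← f.map_rel_iff]
    rcases eq_or_ne u v with rfl | huv
    · exact iff_of_true (refl_of r _) (Or.inr ⟨rfl, refl_of s _⟩)
    · exact (lexLe_iff_of_fst_ne (inj.ne huv)).symm
  · have fst_eq (u v : γ) : (f u).1 = (f v).1 := by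
      have huv : Setoid.ker (Prod.fst ∘ f) u v := htop ▸ trivial
      exact huv
    have inj : Function.Injective (Prod.snd ∘ f) :=
      fun u v h => f.injective (Prod.ext (fst_eq u v) h)
    refine hs.false ⟨⟨_, inj⟩, fun {u v} => ?_⟩
    rw [← f.map_rel_iff]
    exact (lexLe_iff_of_fst_eq (fst_eq u v)).symm

end Modules

section HalfLadder

/-- The half-ladder: the ladder `L_{k+1}` without its least vertex `x_1` and its greatest vertex
`y_{k+1}`. Here `inl i` and `inr i` are the `i`-th remaining vertices of the lower and the upper
leg, with `i` counted from `0`; in terms of `L_{k+1}` these are `x_{i+2}` and `y_{i+1}`. -/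
def HalfLadderLE (k : ℕ) : Fin k ⊕ Fin k → Fin k ⊕ Fin k → Prop
  | .inl i, .inl j => i ≤ j
  | .inr i, .inr j => i ≤ j
  | .inl i, .inr j => i < j
  | .inr _, .inl _ => False

variable {k : ℕ}

instance : Std.Antisymm (HalfLadderLE k) where
  antisymm := by
    rintro (i | i) (j | j) hij hji
    · exact congrArg _ (le_antisymm hij hji)
    · exact hji.elim
    · exact hij.elim
    · exact congrArg _ (le_antisymm hij hji)

theorem incompRel_halfLadderLE_inr_inl {i j : Fin k} :
    IncompRel (HalfLadderLE k) (.inr i) (.inl j) ↔ i ≤ j := by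
  simp [IncompRel, HalfLadderLE]

theorem not_incompRel_halfLadderLE_inl_inl (i j : Fin k) :
    ¬ IncompRel (HalfLadderLE k) (.inl i) (.inl j) :=
  fun h => (le_total i j).elim h.1 h.2

theorem not_incompRel_halfLadderLE_inr_inr (i j : Fin k) :
    ¬ IncompRel (HalfLadderLE k) (.inr i) (.inr j) :=
  fun h => (le_total i j).elim h.1 h.2

namespace IsModularPartition

variable {c : Setoid (Fin k ⊕ Fin k)}

theorem halfLadder_eq_top (hc : IsModularPartition (HalfLadderLE k) c) {i : Fin k}
    (hi : c (.inl i) (.inr i)) : c = ⊤ := by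
  have inl_of_le (t : Fin k) (h : i ≤ t) : c (.inr i) (.inl t) :=
    hc.of_incompRel (c.symm hi) (incompRel_halfLadderLE_inr_inl.2 h)
      (not_incompRel_halfLadderLE_inl_inl i t)
  have inr_of_le (t : Fin k) (h : t ≤ i) : c (.inl i) (.inr t) :=
    hc.of_incompRel hi (incompRel_halfLadderLE_inr_inl.2 h).symm
      (not_incompRel_halfLadderLE_inr_inr i t)
  have inl_rel (t : Fin k) : c (.inl i) (.inl t) := by
    rcases le_total i t with h | h
    · exact c.trans hi (inl_of_le t h)
    · have ht := inr_of_le t h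
      exact c.trans ht (hc.of_incompRel (c.symm ht) (incompRel_halfLadderLE_inr_inl.2 le_rfl)
        (not_incompRel_halfLadderLE_inl_inl i t))
  have inr_rel (t : Fin k) : c (.inl i) (.inr t) := by
    rcases le_total t i with h | h
    · exact inr_of_le t h
    · have ht := c.symm (inl_of_le t h)
      exact c.trans (inl_rel t) (hc.of_incompRel ht
        (incompRel_halfLadderLE_inr_inl.2 le_rfl).symm (not_incompRel_halfLadderLE_inr_inr i t))
  have rel : ∀ u, c (.inl i) u := Sum.rec inl_rel inr_rel
  exact eq_top_iff.2 fun u v _ => c.trans (c.symm (rel u)) (rel v)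

theorem halfLadder_exists_rung (hc : IsModularPartition (HalfLadderLE k) c)
    {u v : Fin k ⊕ Fin k} (huv : c u v) (hne : u ≠ v) : ∃ i, c (.inl i) (.inr i) := by
  have inl_inl {i j : Fin k} (hij : i < j) (h : c (.inl i) (.inl j)) : c (.inl j) (.inr j) :=
    hc.of_incompRel (c.symm h) (incompRel_halfLadderLE_inr_inl.2 le_rfl).symm (fun h' => h'.1 hij)
  have inr_inr {i j : Fin k} (hij : i < j) (h : c (.inr i) (.inr j)) : c (.inl i) (.inr i) :=
    c.symm (hc.of_incompRel h (incompRel_halfLadderLE_inr_inl.2 le_rfl) (fun h' => h'.2 hij))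
  have inl_inr {i j : Fin k} (h : c (.inl i) (.inr j)) : c (.inl i) (.inr i) :=
    hc.of_incompRel h (incompRel_halfLadderLE_inr_inl.2 le_rfl).symm
      (not_incompRel_halfLadderLE_inr_inr j i)
  rcases u with i | i <;> rcases v with j | j
  · rcases lt_or_gt_of_ne (fun h => hne (congrArg _ h)) with hij | hji
    · exact ⟨j, inl_inl hij huv⟩
    · exact ⟨i, inl_inl hji (c.symm huv)⟩
  · exact ⟨i, inl_inr huv⟩
  · exact ⟨j, inl_inr (c.symm huv)⟩
  · rcases lt_or_gt_of_ne (fun h => hne (congrArg _ h)) with hij | hji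
    · exact ⟨i, inr_inr hij huv⟩
    · exact ⟨j, inr_inr hji (c.symm huv)⟩

end IsModularPartition

theorem isIndecomposable_halfLadderLE : IsIndecomposable (HalfLadderLE k) := by
  intro c hc
  by_cases hbot : ∀ u v, c u v → u = v
  · exact Or.inl (eq_bot_iff.2 hbot)
  · push Not at hbot
    obtain ⟨u, v, huv, hne⟩ := hbot
    obtain ⟨i, hi⟩ := hc.halfLadder_exists_rung huv hne
    exact Or.inr (hc.halfLadder_eq_top hi)

end HalfLadder

section Ladder

variable {α : Type*} {r : α → α → Prop}

theorem rel_iff_le_of_forall_lt [Std.Refl r] [Std.Antisymm r] {ι : Type*} [LinearOrder ι]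
    {x : ι → α} (hx : ∀ i j, i < j → r (x i) (x j) ∧ x i ≠ x j) {i j : ι} :
    r (x i) (x j) ↔ i ≤ j := by
  refine ⟨fun h => not_lt.1 fun hji => ?_, fun h => ?_⟩
  · exact (hx j i hji).2 (antisymm_of r (hx j i hji).1 h)
  · rcases h.eq_or_lt with rfl | hij
    · exact refl_of r _
    · exact (hx i j hij).1

theorem IsLadderIn.exists_halfLadder [IsPartialOrder α r] {k : ℕ} {x y : Fin (k + 1) → α}
    (h : IsLadderIn r x y) :
    ∃ f : HalfLadderLE k ↪r r, ∀ v, ∃ a, r (f v) a ∧ f v ≠ a := by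
  obtain ⟨hx, hy, hxy, hinc⟩ := h
  have x_iff {i j} : r (x i) (x j) ↔ i ≤ j := rel_iff_le_of_forall_lt hx
  have y_iff {i j} : r (y i) (y j) ↔ i ≤ j := rel_iff_le_of_forall_lt hy
  have not_y_x (i j) : ¬ r (y i) (x j) := fun hyx => by
    rcases lt_or_ge i j with hij | hji
    · exact (hinc i j hij).1 hyx
    · have hyx' : r (y j) (x j) := trans_of r (y_iff.2 hji) hyx
      exact (hxy j).2 (antisymm_of r (hxy j).1 hyx')
  have x_y_iff (i j : Fin k) : r (x i.succ) (y j.castSucc) ↔ i < j := by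
    refine ⟨fun hr => not_le.1 fun hji => ?_, fun hij => ?_⟩
    · exact (hinc _ _ (Fin.castSucc_lt_succ_iff.2 hji)).2 hr
    · exact trans_of r (hxy i.succ).1 (y_iff.2 (Fin.succ_le_castSucc_iff.2 hij))
  refine ⟨RelEmbedding.ofMapRelIff
    (Sum.elim (fun i : Fin k => x i.succ) (fun i : Fin k => y i.castSucc)) ?_, ?_⟩
  · rintro (i | i) (j | j)
    · exact x_iff.trans Fin.succ_le_succ_iff
    · exact x_y_iff i j
    · exact iff_of_false (not_y_x _ _) id
    · exact y_iff.trans Fin.castSucc_le_castSucc_iff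
  · rintro (i | i)
    · exact ⟨_, hxy i.succ⟩
    · exact ⟨_, hy _ _ (Fin.castSucc_lt_last i)⟩

end Ladder

section LinearSum

variable {α β : Type*} {r : α → α → Prop} {s : β → β → Prop}

instance isPartialOrder_eq : IsPartialOrder α Eq where
  antisymm _ _ h _ := h

instance isPartialOrder_sumLex [IsPartialOrder α r] [IsPartialOrder β s] :
    IsPartialOrder (α ⊕ β) (Sum.Lex r s) where

theorem WidthLE.sumLex {w : ℕ} (hr : WidthLE r w) (hs : WidthLE s w) :
    WidthLE (Sum.Lex r s) w := by
  intro S hS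
  have card_left : S.toLeft.card ≤ w := hr _ fun a ha b hb hab => by
    simpa using hS _ (Finset.mem_toLeft.1 ha) _ (Finset.mem_toLeft.1 hb) (by simpa using hab)
  have card_right : S.toRight.card ≤ w := hs _ fun a ha b hb hab => by
    simpa using hS _ (Finset.mem_toRight.1 ha) _ (Finset.mem_toRight.1 hb) (by simpa using hab)
  have one_side : S.toLeft = ∅ ∨ S.toRight = ∅ := by
    by_contra! hne
    obtain ⟨⟨a, ha⟩, b, hb⟩ := hne
    exact (hS _ (Finset.mem_toLeft.1 ha) _ (Finset.mem_toRight.1 hb) Sum.inl_ne_inr).1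
      (Sum.Lex.sep a b)
  rw [← Finset.card_toLeft_add_card_toRight]
  rcases one_side with h | h <;> simpa [h]

theorem IsWidth.sumLex {w : ℕ} (hr : WidthLE r w) (hs : IsWidth s w) :
    IsWidth (Sum.Lex r s) w := by
  obtain ⟨⟨S, hS, hcard⟩, hle⟩ := hs
  let inr : s ↪r Sum.Lex r s := ⟨.inr, Sum.lex_inr_inr⟩
  exact ⟨⟨S.map inr.toEmbedding, hS.map inr, (Finset.card_map _).trans hcard⟩, hr.sumLex hle⟩

theorem IsGrundy.sumLex {n n' : ℕ} {g : α → ℕ} {g' : β → ℕ} (hg : IsGrundy r n g)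
    (hg' : IsGrundy s n' g') : IsGrundy (Sum.Lex r s) (max n n') (Sum.elim g g') := by
  obtain ⟨hrange, hsurj, hchain, hwit⟩ := hg
  obtain ⟨hrange', hsurj', hchain', hwit'⟩ := hg'
  refine ⟨?_, fun i hi hin => ?_, ?_, ?_⟩
  · rintro (a | b)
    · exact (hrange a).imp_right (le_max_of_le_left ·)
    · exact (hrange' b).imp_right (le_max_of_le_right ·)
  · rcases le_max_iff.1 hin with hin | hin
    · exact (hsurj i hi hin).imp' Sum.inl fun _ => id
    · exact (hsurj' i hi hin).imp' Sum.inr fun _ => id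
  · rintro (a | b) (a' | b') h
    · exact (hchain a a' h).imp Sum.Lex.inl Sum.Lex.inl
    · exact Or.inl (Sum.Lex.sep a b')
    · exact Or.inr (Sum.Lex.sep a' b)
    · exact (hchain' b b' h).imp Sum.Lex.inr Sum.Lex.inr
  · rintro (a | b) i hi hlt
    · exact (hwit a i hi hlt).imp' Sum.inl (by simp)
    · exact (hwit' b i hi hlt).imp' Sum.inr (by simp)

theorem lFree_sumLex_eq [IsPartialOrder α r] {k : ℕ} (hr : IsEmpty (HalfLadderLE k ↪r r)) :
    LFree (Sum.Lex r (Eq : β → β → Prop)) (k + 1) := by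
  rintro ⟨x, y, hxy⟩
  obtain ⟨f, hf⟩ := hxy.exists_halfLadder
  have mem_left (v) : ∃ a, f v = .inl a := by
    obtain ⟨u, hu, hne⟩ := hf v
    rcases hfv : f v with a | b
    · exact ⟨a, rfl⟩
    · rw [hfv] at hu hne
      cases hu with
      | inr h => exact absurd (congrArg _ h) hne
  choose φ hφ using mem_left
  refine hr.false (RelEmbedding.ofMapRelIff φ fun u v => ?_)
  rw [← f.map_rel_iff, hφ, hφ, Sum.lex_inl_inl]

end LinearSum

section DiscreteOrder

theorem isWidth_eq (w : ℕ) : IsWidth (Eq : Fin w → Fin w → Prop) w :=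
  ⟨⟨Finset.univ, fun _ _ _ _ hab => ⟨hab, hab.symm⟩, Finset.card_fin w⟩,
    fun S _ => card_finset_fin_le S⟩

theorem isGrundyColoring_id_eq {κ : Type*} [Preorder κ] :
    IsGrundyColoring (Eq : κ → κ → Prop) id where
  surjective := Function.surjective_id
  not_incompRel _ _ huv hinc := hinc.1 huv
  exists_incompRel _ i hi := ⟨i, ⟨hi.ne, hi.ne'⟩, rfl⟩

end DiscreteOrder

section Staircase

/-- The ground set of the width-two building block: `p.1.1` is the level of `p` and `p.1.2` its
color, and level `i` carries exactly the colors smaller than `n - i`. -/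
abbrev Staircase (n : ℕ) : Type :=
  {p : Fin n × Fin n // (p.1 : ℕ) + p.2 < n}

/-- The order of `Staircase n`: points on adjacent levels are compared coordinatewise, and every
point lies below all points at least two levels higher. -/
def StaircaseLE (n : ℕ) (p q : Staircase n) : Prop :=
  (p.1.1 : ℕ) + 2 ≤ q.1.1 ∨ p.1.1 ≤ q.1.1 ∧ p.1.2 ≤ q.1.2

variable {n : ℕ}

instance : IsPartialOrder (Staircase n) (StaircaseLE n) where
  refl p := by simp [StaircaseLE]
  trans p q u := by grind [StaircaseLE]
  antisymm p q := by grind [StaircaseLE]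

theorem incompRel_staircaseLE_iff {p q : Staircase n} :
    IncompRel (StaircaseLE n) p q ↔
      (q.1.1 : ℕ) = p.1.1 + 1 ∧ q.1.2 < p.1.2 ∨ (p.1.1 : ℕ) = q.1.1 + 1 ∧ p.1.2 < q.1.2 := by
  simp only [IncompRel, StaircaseLE, Fin.le_def, Fin.lt_def]
  lia

theorem widthLE_staircaseLE : WidthLE (StaircaseLE n) 2 := by
  intro S hS
  by_contra! hcard
  obtain ⟨a, ha, b, hb, c, hc, hab, hac, hbc⟩ := Finset.two_lt_card.1 hcard
  have hab := incompRel_staircaseLE_iff.1 (hS a ha b hb hab)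
  have hac := incompRel_staircaseLE_iff.1 (hS a ha c hc hac)
  have hbc := incompRel_staircaseLE_iff.1 (hS b hb c hc hbc)
  lia

theorem isGrundyColoring_staircaseLE :
    IsGrundyColoring (StaircaseLE n) (fun p => p.1.2) where
  surjective i := ⟨⟨(⟨0, i.pos⟩, i), by simp⟩, rfl⟩
  not_incompRel p q hpq hinc := by
    rcases incompRel_staircaseLE_iff.1 hinc with h | h
    · exact h.2.ne hpq.symm
    · exact h.2.ne hpq
  exists_incompRel p i hi := by
    have hp := p.2
    have hlevel : (p.1.1 : ℕ) + 1 + i < n := by have := Fin.lt_def.1 hi; lia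
    refine ⟨⟨(⟨p.1.1 + 1, by lia⟩, i), hlevel⟩, ?_, rfl⟩
    exact incompRel_staircaseLE_iff.2 (Or.inr ⟨rfl, hi⟩)

theorem injOn_color_staircase (p : Staircase n) :
    Set.InjOn (fun q : Staircase n => q.1.2) {q | IncompRel (StaircaseLE n) p q} := by
  intro q hq q' hq' hcolor
  have hcolor : q.1.2 = q'.1.2 := hcolor
  have hq := incompRel_staircaseLE_iff.1 hq
  have hq' := incompRel_staircaseLE_iff.1 hq'
  refine Subtype.ext (Prod.ext (Fin.ext ?_) hcolor)
  rw [← hcolor] at hq'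
  lia

-- The bottom of the upper leg is incomparable to all `n` vertices of the lower leg, so their
-- colors are distinct and exhaust all `n` colors, including its own.
theorem isEmpty_halfLadder_staircase (hn : 0 < n) :
    IsEmpty (HalfLadderLE n ↪r StaircaseLE n) := by
  refine ⟨fun f => ?_⟩
  let v : Staircase n := f (.inr ⟨0, hn⟩)
  let color : Fin n → Fin n := fun i => (f (.inl i)).1.2
  have incomp (i : Fin n) : IncompRel (StaircaseLE n) v (f (.inl i)) :=
    (incompRel_halfLadderLE_inr_inl.2 (Fin.le_def.2 (Nat.zero_le _))).imp
      (mt f.map_rel_iff.1) (mt f.map_rel_iff.1)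
  have color_injective : Function.Injective color := fun i j hij =>
    Sum.inl_injective (f.injective (injOn_color_staircase v (incomp i) (incomp j) hij))
  obtain ⟨i, hi⟩ := Finite.surjective_of_injective color_injective v.1.2
  exact isGrundyColoring_staircaseLE.not_incompRel hi.symm (incomp i)

end Staircase

section Witness

/-- `(α, r)` is a poset of width at most `w` without half-ladders of size `k` on which First-Fit can
be forced to use `n` colors. -/
structure IsFirstFitWitness {α : Type*} (r : α → α → Prop) (k w n : ℕ) : Prop where
  isPartialOrder : IsPartialOrder α r
  halfLadder_free : IsEmpty (HalfLadderLE k ↪r r)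
  widthLE : WidthLE r w
  exists_coloring : ∃ g : α → Fin n, IsGrundyColoring r g

variable {α β : Type*} {r : α → α → Prop} {s : β → β → Prop} {k w w' n n' : ℕ}

theorem IsFirstFitWitness.mono (h : IsFirstFitWitness r k w n) (hw : w ≤ w') :
    IsFirstFitWitness r k w' n :=
  { h with widthLE := h.widthLE.mono hw }

theorem IsFirstFitWitness.lexLe (hr : IsFirstFitWitness r k w n)
    (hs : IsFirstFitWitness s k w' n') :
    IsFirstFitWitness (LexLe r s) k (w * w') (n * n') := by
  have := hr.isPartialOrder
  have := hs.isPartialOrder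
  obtain ⟨g, hg⟩ := hr.exists_coloring
  obtain ⟨g', hg'⟩ := hs.exists_coloring
  have card_colors : Fintype.card (Fin n ×ₗ Fin n') = n * n' := by
    rw [Fintype.card_lex, Fintype.card_prod, Fintype.card_fin, Fintype.card_fin]
  exact ⟨isPartialOrder_lexLe,
    isIndecomposable_halfLadderLE.isEmpty_relEmbedding_lexLe hr.halfLadder_free hs.halfLadder_free,
    hr.widthLE.lexLe hs.widthLE,
    _, (hg.lexLe hg').comp_orderIso (Fintype.orderIsoFinOfCardEq _ card_colors).symm⟩

theorem isFirstFitWitness_staircaseLE (hk : 0 < k) : IsFirstFitWitness (StaircaseLE k) k 2 k :=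
  ⟨inferInstance, isEmpty_halfLadder_staircase hk, widthLE_staircaseLE,
    _, isGrundyColoring_staircaseLE⟩

theorem isFirstFitWitness_point (hk : 0 < k) :
    IsFirstFitWitness (Eq : Fin 1 → Fin 1 → Prop) k 1 1 where
  isPartialOrder := inferInstance
  halfLadder_free := ⟨fun f => Sum.inl_ne_inr <|
    f.injective (Subsingleton.elim (f (.inl ⟨0, hk⟩)) (f (.inr ⟨0, hk⟩)))⟩
  widthLE := (isWidth_eq 1).2
  exists_coloring := ⟨id, isGrundyColoring_id_eq⟩

theorem exists_isFirstFitWitness_pow (hk : 0 < k) (t : ℕ) :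
    ∃ (α : Type) (_ : Finite α) (r : α → α → Prop), IsFirstFitWitness r k (2 ^ t) (k ^ t) := by
  induction t with
  | zero => exact ⟨Fin 1, inferInstance, Eq, isFirstFitWitness_point hk⟩
  | succ t ih =>
    obtain ⟨α, _, r, hr⟩ := ih
    exact ⟨α × Staircase k, inferInstance, _, hr.lexLe (isFirstFitWitness_staircaseLE hk)⟩

theorem IsFirstFitWitness.exists_fin [Finite α] (h : IsFirstFitWitness r k w n) :
    ∃ (N : ℕ) (le : Fin N → Fin N → Prop) (g : Fin N → ℕ), IsPartialOrder (Fin N) le ∧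
      LFree le (k + 1) ∧ IsWidth le w ∧ IsGrundy le (max n w) g := by
  have := Fintype.ofFinite α
  have := h.isPartialOrder
  obtain ⟨g, hg⟩ := h.exists_coloring
  let e : Fin (Fintype.card (α ⊕ Fin w)) ≃ α ⊕ Fin w := (Fintype.equivFin _).symm
  let φ : e ⁻¹'o Sum.Lex r Eq ≃r Sum.Lex r Eq := RelIso.preimage e _
  exact ⟨_, e ⁻¹'o Sum.Lex r Eq, _, φ.toRelEmbedding.isPartialOrder,
    (lFree_sumLex_eq h.halfLadder_free).of_relEmbedding φ.toRelEmbedding,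
    (IsWidth.sumLex h.widthLE (isWidth_eq w)).of_relIso φ,
    (hg.isGrundy.sumLex isGrundyColoring_id_eq.isGrundy).comp_relIso φ⟩

end Witness

theorem rpow_logb_div_le_pow_natLog {b : ℕ} (hb : 1 < b) (w : ℕ) {x : ℝ} (hx : 1 ≤ x) :
    (w : ℝ) ^ Real.logb b x / x ≤ x ^ Nat.log b w := by
  have hx0 : 0 < x := one_pos.trans_le hx
  have hb1 : (1 : ℝ) < b := Nat.one_lt_cast.2 hb
  have hb0 : (0 : ℝ) < b := one_pos.trans hb1
  have hw : (w : ℝ) ≤ (b : ℝ) ^ (Nat.log b w + 1) := mod_cast (Nat.lt_pow_succ_log_self hb w).le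
  rw [div_le_iff₀ hx0, ← pow_succ]
  calc (w : ℝ) ^ Real.logb b x
      ≤ ((b : ℝ) ^ (Nat.log b w + 1)) ^ Real.logb b x :=
        Real.rpow_le_rpow (Nat.cast_nonneg w) hw (Real.logb_nonneg hb1 hx)
    _ = ((b : ℝ) ^ Real.logb b x) ^ (Nat.log b w + 1) :=
        (Real.rpow_pow_comm hb0.le _ _).symm
    _ = x ^ (Nat.log b w + 1) := by rw [Real.rpow_logb hb0 hb1.ne' hx0]

/-- for `m > 1` and `w ≥ 1` there is a finite `L_m`-free poset
of width `w` with an `n`-Grundy coloring where `n ≥ w^(lg(m−1))/(m−1)`. -/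
theorem stmt_19 (m w : ℕ) (hm : 1 < m) (hw : 0 < w) :
    ∃ (N : ℕ) (le : Fin N → Fin N → Prop) (n : ℕ) (g : Fin N → ℕ),
      IsPartialOrder (Fin N) le ∧ LFree le m ∧ IsWidth le w ∧
      IsGrundy le n g ∧
      (w : ℝ) ^ Real.logb 2 ((m : ℝ) - 1) / ((m : ℝ) - 1) ≤ (n : ℝ) := by
  obtain ⟨k, rfl⟩ : ∃ k, m = k + 1 := ⟨m - 1, by lia⟩
  have hk : 0 < k := by lia
  obtain ⟨α, _, r, hr⟩ := exists_isFirstFitWitness_pow hk (Nat.log 2 w)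
  have width_le : 2 ^ Nat.log 2 w ≤ w := Nat.pow_log_le_self 2 hw.ne'
  obtain ⟨N, le, g, hle, hfree, hwidth, hg⟩ := (hr.mono width_le).exists_fin
  refine ⟨N, le, _, g, hle, hfree, hwidth, hg, ?_⟩
  rw [Nat.cast_add_one, add_sub_cancel_right]
  calc (w : ℝ) ^ Real.logb 2 k / k ≤ (k : ℝ) ^ Nat.log 2 w :=
        rpow_logb_div_le_pow_natLog Nat.one_lt_two w (Nat.one_le_cast.2 hk)
    _ ≤ (max (k ^ Nat.log 2 w) w : ℕ) := mod_cast le_max_left _ _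
end
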